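/- arXiv:1311.1193 — 9 statements merged into one kernel-verified Lean document; each statement's English description precedes it below -/
import Mathlib

section
/- Let p be a natural number with p > 1. The map Φ sending an element (z_n)_{n∈ℕ} of the p-solenoid 𝕊_p to the character q/p^k ↦ z_k^q of ℤ[1/p] is well defined (its value is independent of the chosen representation q/p^k of an element of ℤ[1/p]) and is an isomorphism of topological groups from 𝕊_p onto the Pontryagin dual of the discrete group ℤ[1/p], i.e. the group of continuous homomorphisms ℤ[1/p] → 𝕋 with the compact-open topology. -/
open scoped Real

/-- The additive subgroup `ℤ[1/p]` of `ℚ` of `p`-adic rationals. -/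
def pAdicRat (p : ℕ) : AddSubgroup ℚ where
  carrier := {r : ℚ | ∃ (z : ℤ) (k : ℕ), r * (p : ℚ) ^ k = z}
  zero_mem' := ⟨0, 0, by simp⟩
  add_mem' := by
    rintro a b ⟨z1, k1, h1⟩ ⟨z2, k2, h2⟩
    refine ⟨z1 * (p : ℤ) ^ k2 + z2 * (p : ℤ) ^ k1, k1 + k2, ?_⟩
    push_cast
    calc (a + b) * (p : ℚ) ^ (k1 + k2)
        = (a * (p : ℚ) ^ k1) * (p : ℚ) ^ k2 + (b * (p : ℚ) ^ k2) * (p : ℚ) ^ k1 := by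
          rw [pow_add]; ring
      _ = (z1 : ℚ) * (p : ℚ) ^ k2 + (z2 : ℚ) * (p : ℚ) ^ k1 := by rw [h1, h2]
  neg_mem' := by
    rintro a ⟨z, k, h⟩
    exact ⟨-z, k, by push_cast; rw [neg_mul, h]⟩

lemma pAdicElem_mem (p : ℕ) (q : ℤ) (k : ℕ) : ((q : ℚ) / (p : ℚ) ^ k) ∈ pAdicRat p := by
  rcases Nat.eq_zero_or_pos p with h | h
  · exact ⟨0, 1, by simp [h]⟩
  · refine ⟨q, k, ?_⟩
    have : ((p : ℚ)) ^ k ≠ 0 := by positivity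
    field_simp

/-- The element `q / p^k` of `ℤ[1/p]`. -/
def pAdicElem (p : ℕ) (q : ℤ) (k : ℕ) : pAdicRat p :=
  ⟨(q : ℚ) / (p : ℚ) ^ k, pAdicElem_mem p q k⟩

/-- The set `Ξ_p` of sequences `α` with `α n ∈ [0,1)` and `p α_{n+1} ≡ α_n mod 1`,
with `p α_{n+1} - α_n ∈ {0, …, p-1}`. -/
def XiSeq (p : ℕ) (α : ℕ → ℝ) : Prop :=
  (∀ n, α n ∈ Set.Ico (0 : ℝ) 1) ∧ ∀ n, ∃ j : ℕ, j < p ∧ (p : ℝ) * α (n + 1) - α n = j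

/-- A `𝕋`-valued multiplier (normalized 2-cocycle) on a discrete abelian group. -/
def IsMultiplier {G : Type*} [AddCommGroup G] (σ : G → G → Circle) : Prop :=
  (∀ g h k : G, σ g h * σ (g + h) k = σ g (h + k) * σ h k) ∧
    ∀ g : G, σ g 0 = 1 ∧ σ 0 g = 1

/-- Two multipliers are cohomologous when they differ by a coboundary. -/
def AreCohomologous {G : Type*} [AddCommGroup G] (σ σ' : G → G → Circle) : Prop :=
  ∃ f : G → Circle, ∀ g h : G, σ g h = f g * f h * (f (g + h))⁻¹ * σ' g h

/-- The defining formula for the multiplier `Ψ_α` on `ℤ[1/p] × ℤ[1/p]`. -/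
def PsiFormula (p : ℕ) (α : ℕ → ℝ)
    (Ψ : (pAdicRat p × pAdicRat p) → (pAdicRat p × pAdicRat p) → Circle) : Prop :=
  ∀ (q1 q2 q3 q4 : ℤ) (k1 k2 k3 k4 : ℕ),
    Ψ (pAdicElem p q1 k1, pAdicElem p q2 k2) (pAdicElem p q3 k3, pAdicElem p q4 k4)
      = Circle.exp (2 * π * (α (k1 + k4) * q1 * q4))

/-- The group `ℤ[1/p]` regarded as a *discrete* topological group. -/
def PadicRatDiscrete (p : ℕ) : Type := pAdicRat p

instance (p : ℕ) : AddCommGroup (PadicRatDiscrete p) :=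
  inferInstanceAs (AddCommGroup (pAdicRat p))

instance (p : ℕ) : TopologicalSpace (PadicRatDiscrete p) := ⊥

instance (p : ℕ) : DiscreteTopology (PadicRatDiscrete p) := ⟨rfl⟩

/-- The element `q / p^k` of the discrete group `ℤ[1/p]`. -/
def pAdicElemD (p : ℕ) (q : ℤ) (k : ℕ) : PadicRatDiscrete p := pAdicElem p q k

/-- The `p`-solenoid `𝕊_p`, as a subgroup of `𝕋^ℕ`: sequences `(z_n)` of elements of the
circle group with `z_{n+1}^p = z_n` for all `n`; it carries the topology induced from the
product topology. -/
noncomputable def solenoid (p : ℕ) : Subgroup (ℕ → Circle) where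
  carrier := {z : ℕ → Circle | ∀ n : ℕ, (z (n + 1)) ^ p = z n}
  one_mem' := fun n => one_pow p
  mul_mem' := by
    intro a b ha hb n
    simp only [Pi.mul_apply, mul_pow, ha n, hb n]
  inv_mem' := by
    intro a ha n
    simp only [Pi.inv_apply, inv_pow, ha n]

/-!
`ℤ[1/p]` is the union of the increasing cyclic groups generated by `1/p^n`, so a homomorphism out
of it amounts to a choice of images `z n` of `1/p^n` subject only to the relations
`p • (1/p^(n+1)) = 1/p^n`, that is, `z (n+1) ^ p = z n`. Since `ℤ[1/p]` is discrete, the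
compact-open topology on its dual is that of pointwise convergence. Hence the character depends
continuously on `z`, each of its values `z k ^ q` being a power of one coordinate of `z`, and
conversely each `z n` is a value of the character.
-/

section PadicRat

variable {p : ℕ}

lemma pAdicElemD_add (a b : ℤ) (n : ℕ) :
    pAdicElemD p a n + pAdicElemD p b n = pAdicElemD p (a + b) n := by
  refine Subtype.ext ?_
  change (a : ℚ) / (p : ℚ) ^ n + (b : ℚ) / (p : ℚ) ^ n = ((a + b : ℤ) : ℚ) / (p : ℚ) ^ n
  rw [Int.cast_add, add_div]

lemma zsmul_pAdicElemD (m q : ℤ) (n : ℕ) :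
    m • pAdicElemD p q n = pAdicElemD p (m * q) n := by
  refine Subtype.ext ?_
  change m • ((q : ℚ) / (p : ℚ) ^ n) = ((m * q : ℤ) : ℚ) / (p : ℚ) ^ n
  rw [zsmul_eq_mul, Int.cast_mul, mul_div_assoc]

variable [NeZero p]

lemma pAdicElemD_eq_iff {q q' : ℤ} {k k' : ℕ} :
    pAdicElemD p q k = pAdicElemD p q' k' ↔ q * (p : ℤ) ^ k' = q' * (p : ℤ) ^ k := by
  have hp (n : ℕ) : (p : ℚ) ^ n ≠ 0 := pow_ne_zero n (NeZero.ne _)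
  have hval : pAdicElemD p q k = pAdicElemD p q' k' ↔
      (q : ℚ) / (p : ℚ) ^ k = (q' : ℚ) / (p : ℚ) ^ k' := Subtype.ext_iff
  rw [hval, div_eq_div_iff (hp k) (hp k')]
  norm_cast

lemma pAdicElemD_mul_pow (q : ℤ) (k m : ℕ) :
    pAdicElemD p (q * (p : ℤ) ^ m) (k + m) = pAdicElemD p q k := by
  rw [pAdicElemD_eq_iff, pow_add]
  ring

lemma nsmul_pAdicElemD_succ (q : ℤ) (n : ℕ) :
    p • pAdicElemD p q (n + 1) = pAdicElemD p q n := by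
  rw [← natCast_zsmul, zsmul_pAdicElemD, mul_comm, ← pAdicElemD_mul_pow q n 1, pow_one]

lemma exists_eq_pAdicElemD (x : PadicRatDiscrete p) :
    ∃ (q : ℤ) (k : ℕ), x = pAdicElemD p q k := by
  obtain ⟨r, q, k, hr⟩ := x
  exact ⟨q, k, Subtype.ext ((eq_div_iff (pow_ne_zero k (NeZero.ne _))).2 hr)⟩

lemma exists_eq_pAdicElemD_common_denom (x y : PadicRatDiscrete p) :
    ∃ (a b : ℤ) (n : ℕ), x = pAdicElemD p a n ∧ y = pAdicElemD p b n := by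
  obtain ⟨q, k, rfl⟩ := exists_eq_pAdicElemD x
  obtain ⟨q', k', rfl⟩ := exists_eq_pAdicElemD y
  refine ⟨q * (p : ℤ) ^ k', q' * (p : ℤ) ^ k, k + k', (pAdicElemD_mul_pow q k k').symm, ?_⟩
  rw [add_comm k k', pAdicElemD_mul_pow]

lemma padicRatDiscrete_monoidHom_ext {H : Type*} [Group H]
    {f g : Multiplicative (PadicRatDiscrete p) →* H}
    (h : ∀ n, f (.ofAdd (pAdicElemD p 1 n)) = g (.ofAdd (pAdicElemD p 1 n))) : f = g := by
  refine MonoidHom.ext fun x => ?_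
  obtain ⟨q, k, hx⟩ := exists_eq_pAdicElemD x.toAdd
  have hx' : x = .ofAdd (pAdicElemD p 1 k) ^ q := by
    rw [← ofAdd_zsmul, zsmul_pAdicElemD, mul_one, ← hx, ofAdd_toAdd]
  rw [hx', map_zpow, map_zpow, h]

end PadicRat

/-- The group of sequences of successive `p`-th roots in a commutative group `G`, i.e. the inverse
limit of `⋯ → G → G → G` along the `p`-th power map. The `p`-solenoid is the case `G = 𝕋`. -/
def rootSeq (p : ℕ) (G : Type*) [CommGroup G] : Subgroup (ℕ → G) where
  carrier := {z | ∀ n, z (n + 1) ^ p = z n}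
  one_mem' _ := one_pow p
  mul_mem' ha hb n := by rw [Pi.mul_apply, mul_pow, ha n, hb n, Pi.mul_apply]
  inv_mem' ha n := by rw [Pi.inv_apply, inv_pow, ha n, Pi.inv_apply]

namespace rootSeq

section Algebra

variable {p : ℕ} {G : Type*} [CommGroup G]

lemma pow_pow_add (z : rootSeq p G) (k m : ℕ) : z.1 (k + m) ^ p ^ m = z.1 k := by
  induction m with
  | zero => rw [pow_zero, pow_one, add_zero]
  | succ m ih => rw [pow_succ', pow_mul, ← add_assoc, z.2 (k + m), ih]

lemma zpow_mul_pow_add (z : rootSeq p G) (q : ℤ) (k m : ℕ) :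
    z.1 (k + m) ^ (q * (p : ℤ) ^ m) = z.1 k ^ q := by
  rw [mul_comm, zpow_mul, ← Nat.cast_pow, zpow_natCast, pow_pow_add]

variable [NeZero p]

lemma zpow_eq_zpow (z : rootSeq p G) {q q' : ℤ} {k k' : ℕ}
    (h : pAdicElemD p q k = pAdicElemD p q' k') : z.1 k ^ q = z.1 k' ^ q' := by
  rw [← zpow_mul_pow_add z q k k', ← zpow_mul_pow_add z q' k' k, pAdicElemD_eq_iff.1 h,
    add_comm k k']

/-- The value at `x` of the homomorphism on `ℤ[1/p]` attached to `z`, computed from a chosen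
representation `x = q / p^k`. -/
noncomputable def eval (z : rootSeq p G) (x : PadicRatDiscrete p) : G :=
  z.1 (exists_eq_pAdicElemD x).choose_spec.choose ^ (exists_eq_pAdicElemD x).choose

lemma eval_pAdicElemD (z : rootSeq p G) (q : ℤ) (k : ℕ) :
    eval z (pAdicElemD p q k) = z.1 k ^ q :=
  zpow_eq_zpow z (exists_eq_pAdicElemD (pAdicElemD p q k)).choose_spec.choose_spec.symm

lemma eval_add (z : rootSeq p G) (x y : PadicRatDiscrete p) :
    eval z (x + y) = eval z x * eval z y := by
  obtain ⟨a, b, n, rfl, rfl⟩ := exists_eq_pAdicElemD_common_denom x y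
  rw [pAdicElemD_add, eval_pAdicElemD, eval_pAdicElemD, eval_pAdicElemD, zpow_add]

/-- Homomorphisms from `ℤ[1/p]` to `G`, written multiplicatively, correspond to sequences of
successive `p`-th roots: `χ` is sent to the sequence of its values at `1 / p^n`. -/
noncomputable def mulEquivMonoidHom :
    rootSeq p G ≃* (Multiplicative (PadicRatDiscrete p) →* G) where
  toFun z := MonoidHom.mk' (fun x => eval z x.toAdd) fun x y => eval_add z x.toAdd y.toAdd
  invFun χ := ⟨fun n => χ (.ofAdd (pAdicElemD p 1 n)), fun n => by
    rw [← map_pow, ← ofAdd_nsmul, nsmul_pAdicElemD_succ]⟩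
  left_inv z := Subtype.ext <| funext fun n => (eval_pAdicElemD z 1 n).trans (zpow_one _)
  right_inv χ := padicRatDiscrete_monoidHom_ext fun n => (eval_pAdicElemD _ 1 n).trans (zpow_one _)
  map_mul' _ _ := MonoidHom.ext fun _ => mul_zpow _ _ _

end Algebra

section Topology

variable {p : ℕ} [NeZero p] {G : Type*} [CommGroup G] [TopologicalSpace G] [IsTopologicalGroup G]

lemma continuous_eval (x : PadicRatDiscrete p) : Continuous fun z : rootSeq p G => eval z x :=
  ((continuous_apply _).comp continuous_subtype_val).zpow _

variable (p G) in
/-- The topological form of `mulEquivMonoidHom`, with `ℤ[1/p]` discrete. -/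
noncomputable def continuousMulEquiv :
    rootSeq p G ≃ₜ* (Multiplicative (PadicRatDiscrete p) →ₜ* G) where
  toFun z := ⟨mulEquivMonoidHom z, continuous_of_discreteTopology⟩
  invFun χ := mulEquivMonoidHom.symm χ.toMonoidHom
  left_inv z := mulEquivMonoidHom.symm_apply_apply z
  right_inv _ := ContinuousMonoidHom.toMonoidHom_injective (mulEquivMonoidHom.apply_symm_apply _)
  map_mul' z w := ContinuousMonoidHom.toMonoidHom_injective (map_mul mulEquivMonoidHom z w)
  continuous_toFun :=
    ContinuousMonoidHom.continuous_of_continuous_uncurry _ <|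
      continuous_prod_of_discrete_right.2 fun x => continuous_eval x.toAdd
  continuous_invFun :=
    Continuous.subtype_mk (continuous_pi fun _ => continuous_eval_const _) _

lemma continuousMulEquiv_apply_pAdicElemD (z : rootSeq p G) (q : ℤ) (k : ℕ) :
    continuousMulEquiv p G z (.ofAdd (pAdicElemD p q k)) = z.1 k ^ q :=
  eval_pAdicElemD z q k

end Topology

end rootSeq

theorem solenoid_equiv_pontryaginDual_general (p : ℕ) [NeZero p] (G : Type*) [CommGroup G]
    [TopologicalSpace G] [IsTopologicalGroup G] :
    ∃ Φ : rootSeq p G ≃ₜ* (Multiplicative (PadicRatDiscrete p) →ₜ* G),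
      ∀ (z : rootSeq p G) (q : ℤ) (k : ℕ), Φ z (.ofAdd (pAdicElemD p q k)) = z.1 k ^ q :=
  ⟨rootSeq.continuousMulEquiv p G, rootSeq.continuousMulEquiv_apply_pAdicElemD⟩

/-- For `p > 1`, the map `Φ` sending `(z_n)_{n∈ℕ} ∈ 𝕊_p` to the character
`q/p^k ↦ z_k^q` of `ℤ[1/p]` is well defined (independent of the representation `q/p^k`)
and is an isomorphism of topological groups from `𝕊_p` onto the Pontryagin dual of the
discrete group `ℤ[1/p]`, i.e. the group of continuous homomorphisms `ℤ[1/p] → 𝕋` with the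
compact-open topology. -/
theorem solenoid_equiv_pontryaginDual (p : ℕ) (hp : 1 < p) :
    ∃ Φ : solenoid p ≃ PontryaginDual (Multiplicative (PadicRatDiscrete p)),
      (∀ (z : solenoid p) (q : ℤ) (k : ℕ),
          Φ z (Multiplicative.ofAdd (pAdicElemD p q k)) = ((z : ℕ → Circle) k) ^ q) ∧
      (∀ a b : solenoid p, Φ (a * b) = Φ a * Φ b) ∧
      Continuous Φ ∧ Continuous Φ.symm := by
  have : NeZero p := ⟨by omega⟩
  obtain ⟨Φ, hΦ⟩ := solenoid_equiv_pontryaginDual_general p Circle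
  exact ⟨Φ.toEquiv, hΦ, map_mul Φ, Φ.continuous, Φ.symm.continuous⟩
end

section
/- Let p be a natural number with p > 1 and let α ∈ Ξ_p. Then Ψ_α is well defined (its value does not depend on the chosen representations q_i/p^{k_i} of the elements of ℤ[1/p]) and Ψ_α is a multiplier on the discrete abelian group ℤ[1/p] × ℤ[1/p]. -/
open scoped Real

/-!
A sequence `ζ` in a group with `ζ (n + 1) ^ p = ζ n` is the sequence of values
`χ (1 / p ^ n)` of a homomorphism `χ` on `ℤ[1/p]`, namely `q / p ^ k ↦ ζ k ^ q`. A sequence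
`α ∈ Ξ_p` yields such roots `ζ n = exp (2πi α_n)`, and the formula for `Ψ_α` then reads
`Ψ_α ((x₁, x₂), (y₁, y₂)) = χ (x₁ y₂)`. This does not involve representatives, and it is a
bicharacter because `ℤ[1/p]` is a ring; bicharacters are multipliers.
-/

section pAdicRat

variable {p : ℕ}

lemma exists_eq_pAdicElem (hp : p ≠ 0) (x : pAdicRat p) :
    ∃ (q : ℤ) (k : ℕ), x = pAdicElem p q k := by
  obtain ⟨q, k, h⟩ := x.2
  exact ⟨q, k, Subtype.ext (eq_div_of_mul_eq (by positivity) h)⟩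

lemma pAdicElem_eq_iff (hp : p ≠ 0) {q r : ℤ} {k l : ℕ} :
    pAdicElem p q k = pAdicElem p r l ↔ q * (p : ℤ) ^ l = r * (p : ℤ) ^ k := by
  rw [pAdicElem, pAdicElem, Subtype.mk_eq_mk, div_eq_div_iff (by positivity) (by positivity)]
  exact_mod_cast Iff.rfl

lemma pAdicElem_add (hp : p ≠ 0) (q r : ℤ) (k l : ℕ) :
    pAdicElem p q k + pAdicElem p r l =
      pAdicElem p (q * (p : ℤ) ^ l + r * (p : ℤ) ^ k) (k + l) := by
  ext
  simp only [pAdicElem, AddSubgroup.coe_add, Int.cast_add, Int.cast_mul, Int.cast_pow,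
    Int.cast_natCast, pow_add]
  field_simp

lemma mul_mem_pAdicRat {x y : ℚ} (hx : x ∈ pAdicRat p) (hy : y ∈ pAdicRat p) :
    x * y ∈ pAdicRat p := by
  obtain ⟨q, k, hq⟩ := hx
  obtain ⟨r, l, hr⟩ := hy
  refine ⟨q * r, k + l, ?_⟩
  rw [pow_add, mul_mul_mul_comm, hq, hr, Int.cast_mul]

end pAdicRat

lemma pow_pow_eq_of_pow_succ_eq {p : ℕ} {M : Type*} [Monoid M] {ζ : ℕ → M}
    (hζ : ∀ n, ζ (n + 1) ^ p = ζ n) (k m : ℕ) : ζ (k + m) ^ p ^ m = ζ k := by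
  induction m with
  | zero => simp
  | succ m ih => rw [pow_succ', pow_mul, ← add_assoc, hζ, ih]

section Character

variable {p : ℕ} {M : Type*} [Group M] {ζ : ℕ → M}

lemma zpow_eq_zpow_mul_of_pow_succ_eq (hζ : ∀ n, ζ (n + 1) ^ p = ζ n) (q : ℤ) (k m : ℕ) :
    ζ k ^ q = ζ (k + m) ^ (q * (p : ℤ) ^ m) := by
  rw [← pow_pow_eq_of_pow_succ_eq hζ k m, mul_comm q, zpow_mul, ← Nat.cast_pow, zpow_natCast]

lemma zpow_eq_zpow_of_pAdicElem_eq (hp : p ≠ 0) (hζ : ∀ n, ζ (n + 1) ^ p = ζ n) {q r : ℤ}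
    {k l : ℕ} (h : pAdicElem p q k = pAdicElem p r l) : ζ k ^ q = ζ l ^ r := by
  rw [zpow_eq_zpow_mul_of_pow_succ_eq hζ q k l, zpow_eq_zpow_mul_of_pow_succ_eq hζ r l k,
    (pAdicElem_eq_iff hp).1 h, add_comm]

theorem exists_addChar_pAdicElem (hp : p ≠ 0) (hζ : ∀ n, ζ (n + 1) ^ p = ζ n) :
    ∃ χ : AddChar (pAdicRat p) M, ∀ q k, χ (pAdicElem p q k) = ζ k ^ q := by
  choose num exponent eq_pAdicElem using exists_eq_pAdicElem hp
  let χ (x : pAdicRat p) : M := ζ (exponent x) ^ num x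
  have χ_pAdicElem (q : ℤ) (k : ℕ) : χ (pAdicElem p q k) = ζ k ^ q :=
    zpow_eq_zpow_of_pAdicElem_eq hp hζ (eq_pAdicElem _).symm
  have χ_add (x y : pAdicRat p) : χ (x + y) = χ x * χ y := by
    obtain ⟨q, k, rfl⟩ := exists_eq_pAdicElem hp x
    obtain ⟨r, l, rfl⟩ := exists_eq_pAdicElem hp y
    rw [pAdicElem_add hp, χ_pAdicElem, χ_pAdicElem, χ_pAdicElem, zpow_add,
      zpow_eq_zpow_mul_of_pow_succ_eq hζ q k l, zpow_eq_zpow_mul_of_pow_succ_eq hζ r l k,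
      add_comm l k]
  exact ⟨⟨χ, by simpa using χ_add 0 0, χ_add⟩, χ_pAdicElem⟩

end Character

lemma isMultiplier_of_map_add {G : Type*} [AddCommGroup G] {σ : G → G → Circle}
    (map_add_left : ∀ g h k, σ (g + h) k = σ g k * σ h k)
    (map_add_right : ∀ g h k, σ g (h + k) = σ g h * σ g k) : IsMultiplier σ := by
  refine ⟨fun g h k => ?_, fun g => ⟨?_, ?_⟩⟩
  · rw [map_add_left, map_add_right, mul_assoc]
  · simpa using map_add_right g 0 0
  · simpa using map_add_left 0 0 g

section Bicharacter

variable {p : ℕ} {M : Type*} [Monoid M]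

/-- The bicharacter `((x₁, x₂), (y₁, y₂)) ↦ χ (x₁ y₂)` of `ℤ[1/p] × ℤ[1/p]` attached to a
character `χ` of `ℤ[1/p]`; every `Ψ_α` has this form. -/
def crossBichar (χ : AddChar (pAdicRat p) M) (g h : pAdicRat p × pAdicRat p) : M :=
  χ ⟨g.1 * h.2, mul_mem_pAdicRat g.1.2 h.2.2⟩

lemma crossBichar_pAdicElem (χ : AddChar (pAdicRat p) M) (q r : ℤ) (k l : ℕ)
    (x y : pAdicRat p) :
    crossBichar χ (pAdicElem p q k, x) (y, pAdicElem p r l) = χ (pAdicElem p (q * r) (k + l)) := by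
  refine congrArg χ (Subtype.ext ?_)
  simp only [pAdicElem, div_mul_div_comm, pow_add, Int.cast_mul]

lemma crossBichar_add_left (χ : AddChar (pAdicRat p) M) (g h k : pAdicRat p × pAdicRat p) :
    crossBichar χ (g + h) k = crossBichar χ g k * crossBichar χ h k :=
  (congrArg χ (Subtype.ext (add_mul (g.1 : ℚ) h.1 k.2))).trans (χ.map_add_eq_mul _ _)

lemma crossBichar_add_right (χ : AddChar (pAdicRat p) M) (g h k : pAdicRat p × pAdicRat p) :
    crossBichar χ g (h + k) = crossBichar χ g h * crossBichar χ g k :=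
  (congrArg χ (Subtype.ext (mul_add (g.1 : ℚ) h.2 k.2))).trans (χ.map_add_eq_mul _ _)

end Bicharacter

lemma exp_two_pi_mul_eq_of_modEq {x y : ℝ} (h : x ≡ y [PMOD 1]) :
    Circle.exp (2 * π * x) = Circle.exp (2 * π * y) := by
  obtain ⟨m, hm⟩ := AddCommGroup.modEq_iff_zsmul'.1 h.symm
  refine Circle.exp_eq_exp.2 ⟨m, ?_⟩
  rw [zsmul_one] at hm
  linear_combination 2 * π * hm

theorem psi_wellDefined_isMultiplier_general (p : ℕ) (hp : p ≠ 0) (α : ℕ → ℝ)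
    (hα : ∀ n, (p : ℝ) * α (n + 1) ≡ α n [PMOD 1]) :
    ∃ Ψ : (pAdicRat p × pAdicRat p) → (pAdicRat p × pAdicRat p) → Circle,
      PsiFormula p α Ψ ∧ IsMultiplier Ψ := by
  have hroot (n : ℕ) : Circle.exp (2 * π * α (n + 1)) ^ p = Circle.exp (2 * π * α n) := by
    rw [← Circle.exp_nsmul, nsmul_eq_mul, mul_left_comm, exp_two_pi_mul_eq_of_modEq (hα n)]
  obtain ⟨χ, hχ⟩ := exists_addChar_pAdicElem (ζ := fun n => Circle.exp (2 * π * α n)) hp hroot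
  refine ⟨crossBichar χ, fun q₁ q₂ q₃ q₄ k₁ k₂ k₃ k₄ => ?_,
    isMultiplier_of_map_add (crossBichar_add_left χ) (crossBichar_add_right χ)⟩
  rw [crossBichar_pAdicElem, hχ, ← Circle.exp_zsmul, zsmul_eq_mul, Int.cast_mul]
  congr 1
  ring

lemma XiSeq.mul_modEq {p : ℕ} {α : ℕ → ℝ} (hα : XiSeq p α) (n : ℕ) :
    (p : ℝ) * α (n + 1) ≡ α n [PMOD 1] := by
  obtain ⟨j, -, hj⟩ := hα.2 n
  exact (AddCommGroup.modEq_iff_zsmul'.2 ⟨j, by simpa using hj⟩).symm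

/-- For `p > 1` and `α ∈ Ξ_p`, the map `Ψ_α` is well defined (its value does
not depend on the chosen representations `q_i / p^{k_i}`) and is a multiplier on the
discrete abelian group `ℤ[1/p] × ℤ[1/p]`. -/
theorem psi_wellDefined_isMultiplier (p : ℕ) (hp : 1 < p) (α : ℕ → ℝ) (hα : XiSeq p α) :
    ∃ Ψ : (pAdicRat p × pAdicRat p) → (pAdicRat p × pAdicRat p) → Circle,
      PsiFormula p α Ψ ∧ IsMultiplier Ψ :=
  psi_wellDefined_isMultiplier_general p (by lia) α hα.mul_modEq
end

section
/- Let p be a natural number with p > 1. Every multiplier on the discrete group ℤ[1/p] is trivial: for any multiplier σ on ℤ[1/p] there exists f : ℤ[1/p] → 𝕋 such that σ(r,s) = f(r)·f(s)·f(r+s)^{-1} for all r,s ∈ ℤ[1/p]. -/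
open scoped Real

/-!
A symmetric `2`-cocycle of `G` with values in a divisible group `A` defines an *abelian* extension
of `G` by `A`, which splits because `A` is injective as a `ℤ`-module; hence it is a coboundary.
In general the asymmetry `σ(g, h) - σ(h, g)` of a cocycle is an alternating biadditive map. On a
locally cyclic group, such as a subgroup of `ℚ`, any two elements are multiples `m • c` and `n • c`
of a common element, so an alternating biadditive map takes there the value `m n • B(c, c) = 0`
and every cocycle is symmetric.
-/

/-- Locally cyclic additive groups, in the two-generator form: any two elements lie in a common
cyclic subgroup. Equivalently, every finitely generated subgroup is cyclic. -/
class IsLocallyAddCyclic (G : Type*) [AddGroup G] : Prop where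
  exists_mem_zmultiples (a b : G) :
    ∃ c : G, a ∈ AddSubgroup.zmultiples c ∧ b ∈ AddSubgroup.zmultiples c

instance isLocallyAddCyclic_addSubgroup {G : Type*} [AddGroup G] [IsLocallyAddCyclic G]
    (H : AddSubgroup G) : IsLocallyAddCyclic H where
  exists_mem_zmultiples a b := by
    obtain ⟨c, ha, hb⟩ := IsLocallyAddCyclic.exists_mem_zmultiples (a : G) b
    obtain ⟨d, hd⟩ := (AddSubgroup.isAddCyclic_iff_exists_zmultiples_eq_top _).mp
      (AddSubgroup.isAddCyclic_of_le (inf_le_left : AddSubgroup.zmultiples c ⊓ H ≤ _))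
    have hdH : d ∈ H := (hd.le (AddSubgroup.mem_zmultiples d)).2
    have mem_zmultiples_of_coe (x : H) (hx : (x : G) ∈ AddSubgroup.zmultiples c) :
        x ∈ AddSubgroup.zmultiples (⟨d, hdH⟩ : H) := by
      obtain ⟨n, hn⟩ := hd.ge ⟨hx, x.2⟩
      exact ⟨n, Subtype.ext hn⟩
    exact ⟨⟨d, hdH⟩, mem_zmultiples_of_coe a ha, mem_zmultiples_of_coe b hb⟩

instance isLocallyAddCyclic_rat : IsLocallyAddCyclic ℚ where
  exists_mem_zmultiples a b := by
    have num_mul_den_zsmul (x y : ℚ) : ((x.num * y.den : ℤ) • ((x.den : ℚ) * y.den)⁻¹ : ℚ) = x := by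
      conv_rhs => rw [← x.num_div_den]
      rw [zsmul_eq_mul]
      push_cast
      field_simp
    refine ⟨((a.den : ℚ) * b.den)⁻¹, ⟨_, num_mul_den_zsmul a b⟩, ⟨b.num * a.den, ?_⟩⟩
    simpa only [mul_comm (a.den : ℚ)] using num_mul_den_zsmul b a

theorem biadditive_eq_zero_of_alternating {G A : Type*} [AddGroup G] [IsLocallyAddCyclic G]
    [AddCommGroup A] {B : G →+ G →+ A} (hB : ∀ g, B g g = 0) : B = 0 := by
  ext g h
  obtain ⟨c, ⟨m, rfl⟩, ⟨n, rfl⟩⟩ := IsLocallyAddCyclic.exists_mem_zmultiples g h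
  simp [hB]

section Cocycle

variable {G A : Type*} [AddCommGroup G] [AddCommGroup A] {σ : G → G → A}

/-- Additive `2`-cocycles of `G` with values in `A`, for the trivial action of `G` on `A`.
They are not required to be normalized. -/
def IsAddTwoCocycle (σ : G → G → A) : Prop :=
  ∀ g h k : G, σ g h + σ (g + h) k = σ g (h + k) + σ h k

namespace IsAddTwoCocycle

theorem zero_left (hσ : IsAddTwoCocycle σ) (g : G) : σ 0 g = σ 0 0 := by
  simpa using (hσ 0 0 g).symm

theorem sub_swap_add_left (hσ : IsAddTwoCocycle σ) (g h k : G) :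
    σ (g + h) k - σ k (g + h) = σ g k - σ k g + (σ h k - σ k h) := by
  have hgkh := hσ g k h
  have hkgh := hσ k g h
  rw [add_comm k h] at hgkh
  rw [add_comm k g] at hkgh
  linear_combination (norm := abel) hσ g h k + hkgh - hgkh

/-- The commutator pairing `(g, h) ↦ σ(g, h) - σ(h, g)` of a cocycle: the commutator of lifts of
`g` and `h` to the extension of `G` defined by `σ`. -/
def commutatorPairing (hσ : IsAddTwoCocycle σ) : G →+ G →+ A :=
  AddMonoidHom.mk' (fun g => AddMonoidHom.mk' (fun h => σ g h - σ h g) fun h k => by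
    linear_combination (norm := abel) -hσ.sub_swap_add_left h k g)
    fun g h => AddMonoidHom.ext (hσ.sub_swap_add_left g h)

theorem symm_of_isLocallyAddCyclic [IsLocallyAddCyclic G] (hσ : IsAddTwoCocycle σ) (g h : G) :
    σ g h = σ h g := by
  have hpairing : hσ.commutatorPairing = 0 :=
    biadditive_eq_zero_of_alternating fun g => sub_self (σ g g)
  exact sub_eq_zero.mp (DFunLike.congr_fun (DFunLike.congr_fun hpairing g) h)

end IsAddTwoCocycle

/-- The abelian extension of `G` by `A` defined by a symmetric cocycle `σ`: the set `A × G` with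
the addition `(a, g) + (b, h) = (a + b + σ(g, h), g + h)`. The proofs that `σ` is a symmetric
cocycle are parameters so that the group structure can be an instance. -/
@[ext]
structure CocycleExtension (hσ : IsAddTwoCocycle σ) (hsymm : ∀ g h, σ g h = σ h g) where
  fiber : A
  base : G

namespace CocycleExtension

variable {hσ : IsAddTwoCocycle σ} {hsymm : ∀ g h, σ g h = σ h g}

instance : Add (CocycleExtension hσ hsymm) where
  add x y := ⟨x.fiber + y.fiber + σ x.base y.base, x.base + y.base⟩

instance : Zero (CocycleExtension hσ hsymm) where
  zero := ⟨-σ 0 0, 0⟩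

instance : Neg (CocycleExtension hσ hsymm) where
  neg x := ⟨-x.fiber - σ (-x.base) x.base - σ 0 0, -x.base⟩

@[simp] theorem fiber_add (x y : CocycleExtension hσ hsymm) :
    (x + y).fiber = x.fiber + y.fiber + σ x.base y.base := rfl

@[simp] theorem base_add (x y : CocycleExtension hσ hsymm) : (x + y).base = x.base + y.base := rfl

@[simp] theorem fiber_zero : (0 : CocycleExtension hσ hsymm).fiber = -σ 0 0 := rfl

@[simp] theorem base_zero : (0 : CocycleExtension hσ hsymm).base = 0 := rfl

@[simp] theorem fiber_neg (x : CocycleExtension hσ hsymm) :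
    (-x).fiber = -x.fiber - σ (-x.base) x.base - σ 0 0 := rfl

@[simp] theorem base_neg (x : CocycleExtension hσ hsymm) : (-x).base = -x.base := rfl

instance : AddCommGroup (CocycleExtension hσ hsymm) where
  __ := AddGroup.ofLeftAxioms
    (fun x y z => by
      ext
      · simp only [fiber_add, base_add]
        linear_combination (norm := abel) hσ x.base y.base z.base
      · exact add_assoc _ _ _)
    (fun x => by
      ext
      · simp [hσ.zero_left]
      · simp)
    (fun x => by
      ext
      · simp only [fiber_add, fiber_neg, base_neg, fiber_zero]
        abel
      · simp)
  add_comm x y := by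
    ext
    · simp only [fiber_add, hsymm x.base, add_comm x.fiber]
    · exact add_comm _ _

/-- The inclusion of the kernel `A` of the extension. The shift by `σ(0, 0)` is there because the
zero of the extension is `(-σ(0, 0), 0)`. -/
def inclusion (hσ : IsAddTwoCocycle σ) (hsymm : ∀ g h, σ g h = σ h g) :
    A →+ CocycleExtension hσ hsymm :=
  AddMonoidHom.mk' (fun a => ⟨a - σ 0 0, 0⟩) fun a b => by
    ext
    · simp only [fiber_add]
      abel
    · exact (add_zero 0).symm

theorem inclusion_injective : Function.Injective (inclusion hσ hsymm) := fun _ _ h =>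
  sub_left_injective (congrArg fiber h)

theorem mk_zero_add_mk_zero (g h : G) :
    (⟨0, g⟩ + ⟨0, h⟩ : CocycleExtension hσ hsymm) = inclusion hσ hsymm (σ g h) + ⟨0, g + h⟩ := by
  ext
  · simp [inclusion, hσ.zero_left]
  · simp [inclusion]

theorem exists_retraction [DivisibleBy A ℤ] (hσ : IsAddTwoCocycle σ)
    (hsymm : ∀ g h, σ g h = σ h g) :
    ∃ ρ : CocycleExtension hσ hsymm →+ A, ∀ a, ρ (inclusion hσ hsymm a) = a := by
  obtain ⟨ρ, hρ⟩ := (Module.Baer.of_divisible A).extension_property_addMonoidHom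
    (inclusion hσ hsymm) inclusion_injective (AddMonoidHom.id A)
  exact ⟨ρ, DFunLike.congr_fun hρ⟩

end CocycleExtension

theorem IsAddTwoCocycle.exists_eq_coboundary_of_symm [DivisibleBy A ℤ] (hσ : IsAddTwoCocycle σ)
    (hsymm : ∀ g h, σ g h = σ h g) : ∃ f : G → A, ∀ g h, σ g h = f g + f h - f (g + h) := by
  obtain ⟨ρ, hρ⟩ := CocycleExtension.exists_retraction hσ hsymm
  refine ⟨fun g => ρ ⟨0, g⟩, fun g h => ?_⟩
  rw [← map_add, CocycleExtension.mk_zero_add_mk_zero, map_add, hρ, add_sub_cancel_right]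

end Cocycle

theorem IsMultiplier.isAddTwoCocycle_ofMul {G : Type*} [AddCommGroup G] {σ : G → G → Circle}
    (hσ : IsMultiplier σ) : IsAddTwoCocycle fun g h => Additive.ofMul (σ g h) :=
  hσ.1

noncomputable instance divisibleBy_additive_circle : DivisibleBy (Additive Circle) ℤ :=
  Circle.exp_surjective.divisibleBy Circle.expHom fun x n => map_zsmul Circle.expHom n x

theorem multiplier_on_pAdicRat_trivial_general {G : Type*} [AddCommGroup G] [IsLocallyAddCyclic G]
    {σ : G → G → Circle} (hσ : IsMultiplier σ) :
    ∃ f : G → Circle, ∀ r s : G, σ r s = f r * f s * (f (r + s))⁻¹ := by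
  have hcocycle := hσ.isAddTwoCocycle_ofMul
  obtain ⟨f, hf⟩ := hcocycle.exists_eq_coboundary_of_symm hcocycle.symm_of_isLocallyAddCyclic
  exact ⟨fun g => (f g).toMul, fun r s => (hf r s).trans (sub_eq_add_neg _ _)⟩

/-- For `p > 1`, every multiplier on the discrete group `ℤ[1/p]` is trivial:
it is a coboundary. -/
theorem multiplier_on_pAdicRat_trivial (p : ℕ) (hp : 1 < p)
    (σ : pAdicRat p → pAdicRat p → Circle) (hσ : IsMultiplier σ) :
    ∃ f : pAdicRat p → Circle, ∀ r s : pAdicRat p, σ r s = f r * f s * (f (r + s))⁻¹ :=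
  multiplier_on_pAdicRat_trivial_general hσ
end

section
/- Let p be a natural number with p > 1 and let J = (J_k)_{k∈ℕ} be a sequence of integers with J_0 = 0 and J_{k+1} ≡ J_k (mod p^k) for all k. Then ξ_J takes values in ℤ, is symmetric (ξ_J(r,s) = ξ_J(s,r) for all r,s), satisfies ξ_J(r,0) = ξ_J(0,r) = 0, and satisfies the 2-cocycle identity ξ_J(r,s) + ξ_J(r+s,t) = ξ_J(r,s+t) + ξ_J(s,t) for all r,s,t ∈ ℤ[1/p]; that is, ξ_J is a Schur multiplier of ℤ[1/p]. -/
open scoped Real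

/-- `q / p^k` is the reduced form of the rational `r`: it represents `r` and either `k = 0`
or `p` does not divide `q`. -/
def IsReducedForm (p : ℕ) (r : ℚ) (q : ℤ) (k : ℕ) : Prop :=
  r = (q : ℚ) / (p : ℚ) ^ k ∧ (k = 0 ∨ ¬ ((p : ℤ) ∣ q))

/-- The sequence of integers `J` defines a `p`-adic integer: `J 0 = 0` and
`J (k+1) ≡ J k (mod p^k)` for all `k`. -/
def IsPAdicSeq (p : ℕ) (J : ℕ → ℤ) : Prop :=
  J 0 = 0 ∧ ∀ k : ℕ, (p : ℤ) ^ k ∣ (J (k + 1) - J k)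

/-- The defining formula for the Schur multiplier `ξ_J` of `ℤ[1/p]`, written via reduced
forms of the arguments. -/
def XiJFormula (p : ℕ) (J : ℕ → ℤ) (ξ : pAdicRat p → pAdicRat p → ℚ) : Prop :=
  ∀ (r s : pAdicRat p) (q1 : ℤ) (k1 : ℕ) (q2 : ℤ) (k2 : ℕ),
    IsReducedForm p (r : ℚ) q1 k1 → IsReducedForm p (s : ℚ) q2 k2 →
      (k1 < k2 → ξ r s = -((q1 : ℚ) / (p : ℚ) ^ k1) * ((J k2 : ℚ) - J k1)) ∧
      (k2 < k1 → ξ r s = -((q2 : ℚ) / (p : ℚ) ^ k2) * ((J k1 : ℚ) - J k2)) ∧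
      (k1 = k2 → ∀ (q : ℤ) (m : ℕ), IsReducedForm p ((r : ℚ) + (s : ℚ)) q m →
        ξ r s = ((q : ℚ) / (p : ℚ) ^ m) * ((J k1 : ℚ) - J m))

/-!
Up to integers, `r ↦ r * J k` does not depend on `k` once `p ^ k` clears the denominator of `r`,
so choosing `k` least gives a function `f : ℤ[1/p] → ℚ` whose reduction modulo `ℤ` is a
homomorphism, namely multiplication by the `p`-adic integer `lim J k`. The coboundary
`f r + f s - f (r + s)` of `f` is therefore an integer-valued symmetric cocycle. It is `ξ_J`:
when the least exponents of `r` and `s` differ, that of `r + s` is the larger one, and two of the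
three terms combine.
-/

section Coboundary

variable {G A : Type*} [AddCommGroup A]

/-- The coboundary of a function `f` viewed as a 1-cochain with trivial action; it measures the
failure of `f` to be additive. -/
def addCoboundary [Add G] (f : G → A) (r s : G) : A := f r + f s - f (r + s)

lemma addCoboundary_comm [AddCommMagma G] (f : G → A) (r s : G) :
    addCoboundary f r s = addCoboundary f s r := by
  simp only [addCoboundary, add_comm]

lemma addCoboundary_zero_right [AddZeroClass G] (f : G → A) (r : G) :
    addCoboundary f r 0 = f 0 := by
  simp [addCoboundary]

lemma addCoboundary_zero_left [AddZeroClass G] (f : G → A) (r : G) :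
    addCoboundary f 0 r = f 0 := by
  simp [addCoboundary]

lemma addCoboundary_cocycle [AddSemigroup G] (f : G → A) (r s t : G) :
    addCoboundary f r s + addCoboundary f (r + s) t =
      addCoboundary f r (s + t) + addCoboundary f s t := by
  simp only [addCoboundary, add_assoc]
  abel

end Coboundary

lemma pow_dvd_sub_of_pow_dvd_succ_sub {R : Type*} [Ring R] {a : R} {J : ℕ → R}
    (hJ : ∀ k, a ^ k ∣ J (k + 1) - J k) {j k : ℕ} (hjk : j ≤ k) : a ^ j ∣ J k - J j := by
  induction k, hjk using Nat.le_induction with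
  | base => simp
  | succ n hjn ih =>
    rw [← sub_add_sub_cancel]
    exact dvd_add ((pow_dvd_pow a hjn).trans (hJ n)) ih

namespace pAdicRat

variable {p : ℕ} {r s : pAdicRat p} {k : ℕ}

/-- The subgroup `p ^ (-k) ℤ` of `ℤ[1/p]`, described without division: the elements whose
denominator is cleared by `p ^ k`. -/
def level (p k : ℕ) : AddSubgroup (pAdicRat p) :=
  (Int.castAddHom ℚ).range.comap
    ((AddMonoidHom.mulRight ((p : ℚ) ^ k)).comp (pAdicRat p).subtype)

lemma mem_level_iff : r ∈ level p k ↔ ∃ z : ℤ, (z : ℚ) = r * (p : ℚ) ^ k := Iff.rfl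

lemma exists_mem_level (r : pAdicRat p) : ∃ k, r ∈ level p k :=
  let ⟨z, k, hz⟩ := r.2
  ⟨k, z, hz.symm⟩

lemma level_mono : Monotone (level p) := by
  refine monotone_nat_of_le_succ fun k r hr ↦ ?_
  obtain ⟨z, hz⟩ := mem_level_iff.mp hr
  refine mem_level_iff.mpr ⟨z * p, ?_⟩
  push_cast
  rw [hz, pow_succ, mul_assoc]

/-- The least `k` such that `p ^ k` clears the denominator of `r`, that is, the exponent in the
reduced form `q / p ^ k` of `r`. -/
noncomputable def denomExponent (r : pAdicRat p) : ℕ := sInf {k | r ∈ level p k}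

lemma denomExponent_le_iff : denomExponent r ≤ k ↔ r ∈ level p k :=
  ⟨fun h ↦ level_mono h (Nat.sInf_mem (exists_mem_level r)), fun h ↦ Nat.sInf_le h⟩

lemma denomExponent_add_of_lt (h : denomExponent r < denomExponent s) :
    denomExponent (r + s) = denomExponent s := by
  apply le_antisymm
  · exact denomExponent_le_iff.mpr <|
      add_mem (denomExponent_le_iff.mp h.le) (denomExponent_le_iff.mp le_rfl)
  · by_contra! hlt
    set m := max (denomExponent r) (denomExponent (r + s))
    have hr : r ∈ level p m := denomExponent_le_iff.mp (le_max_left _ _)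
    have hrs : r + s ∈ level p m := denomExponent_le_iff.mp (le_max_right _ _)
    have hs : s ∈ level p m := (AddSubgroup.add_mem_cancel_left _ hr).mp hrs
    exact (max_lt h hlt).not_ge (denomExponent_le_iff.mpr hs)

lemma denomExponent_eq_of_isReducedForm (hp : p ≠ 0) {q : ℤ} (h : IsReducedForm p r q k) :
    denomExponent r = k := by
  obtain ⟨hr, hq⟩ := h
  have hrk : (q : ℚ) = r * (p : ℚ) ^ k := by rw [hr]; field_simp
  refine (denomExponent_le_iff.mpr ⟨q, hrk⟩).antisymm (not_lt.mp fun hlt ↦ ?_)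
  obtain ⟨m, rfl⟩ := Nat.exists_eq_add_one_of_ne_zero hlt.ne_bot
  obtain ⟨z, hz⟩ := mem_level_iff.mp (denomExponent_le_iff.mp (Nat.lt_succ_iff.mp hlt))
  refine hq.resolve_left m.succ_ne_zero ⟨z, ?_⟩
  have hqz : (q : ℚ) = p * z := by rw [hrk, hz]; ring
  exact_mod_cast hqz

/-- The function `r ↦ r * J k`, with `k` the exponent of the reduced form of `r`, whose
coboundary is `ξ_J`. -/
noncomputable def mulSeq (J : ℕ → ℤ) (r : pAdicRat p) : ℚ := r * J (denomExponent r)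

lemma mulSeq_zero (J : ℕ → ℤ) : mulSeq J (0 : pAdicRat p) = 0 := by
  simp [mulSeq]

lemma addCoboundary_mulSeq_of_lt (J : ℕ → ℤ) (h : denomExponent r < denomExponent s) :
    addCoboundary (mulSeq J) r s = -r * (J (denomExponent s) - J (denomExponent r)) := by
  simp only [addCoboundary, mulSeq, denomExponent_add_of_lt h, AddSubgroup.coe_add]
  ring

lemma addCoboundary_mulSeq_of_eq (J : ℕ → ℤ) (h : denomExponent r = denomExponent s) :
    addCoboundary (mulSeq J) r s =
      (r + s : ℚ) * (J (denomExponent r) - J (denomExponent (r + s))) := by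
  simp only [addCoboundary, mulSeq, h, AddSubgroup.coe_add]
  ring

theorem xiJFormula_addCoboundary_mulSeq (hp : p ≠ 0) (J : ℕ → ℤ) :
    XiJFormula p J (addCoboundary (mulSeq J)) := by
  intro r s q₁ k₁ q₂ k₂ hr hs
  obtain rfl := denomExponent_eq_of_isReducedForm hp hr
  obtain rfl := denomExponent_eq_of_isReducedForm hp hs
  refine ⟨fun hlt ↦ ?_, fun hgt ↦ ?_, fun heq q m hrs ↦ ?_⟩
  · rw [← hr.1, addCoboundary_mulSeq_of_lt J hlt]
  · rw [← hs.1, addCoboundary_comm, addCoboundary_mulSeq_of_lt J hgt]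
  · obtain rfl := denomExponent_eq_of_isReducedForm (r := r + s) hp hrs
    rw [← hrs.1, addCoboundary_mulSeq_of_eq J heq]

lemma mulSeq_modEq {J : ℕ → ℤ} (hJ : ∀ k, (p : ℤ) ^ k ∣ J (k + 1) - J k) (h : r ∈ level p k) :
    mulSeq J r ≡ r * J k [PMOD (1 : ℚ)] := by
  obtain ⟨z, hz⟩ := mem_level_iff.mp (denomExponent_le_iff.mp (le_refl (denomExponent r)))
  obtain ⟨c, hc⟩ := pow_dvd_sub_of_pow_dvd_succ_sub hJ (denomExponent_le_iff.mpr h)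
  refine AddCommGroup.modEq_iff_eq_add_zsmul.mpr ⟨z * c, ?_⟩
  have hcast : (J k : ℚ) - J (denomExponent r) = p ^ denomExponent r * c := mod_cast hc
  rw [mulSeq, zsmul_one, Int.cast_mul, hz, mul_assoc, ← hcast]
  ring

theorem exists_int_eq_addCoboundary_mulSeq {J : ℕ → ℤ} (hJ : ∀ k, (p : ℤ) ^ k ∣ J (k + 1) - J k)
    (r s : pAdicRat p) : ∃ z : ℤ, addCoboundary (mulSeq J) r s = z := by
  set k := max (denomExponent r) (denomExponent s)
  have hr : r ∈ level p k := denomExponent_le_iff.mp (le_max_left _ _)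
  have hs : s ∈ level p k := denomExponent_le_iff.mp (le_max_right _ _)
  have hmod : addCoboundary (mulSeq J) r s ≡ 0 [PMOD (1 : ℚ)] :=
    calc
      addCoboundary (mulSeq J) r s
        ≡ r * J k + s * J k - (r + s : pAdicRat p) * J k [PMOD (1 : ℚ)] :=
          ((mulSeq_modEq hJ hr).add (mulSeq_modEq hJ hs)).sub (mulSeq_modEq hJ (add_mem hr hs))
      _ = 0 := by rw [AddSubgroup.coe_add]; ring
  obtain ⟨z, hz⟩ := AddCommGroup.modEq_zero_iff_eq_zsmul.mp hmod
  exact ⟨z, by simpa using hz⟩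

end pAdicRat

/-- For `p > 1` and a sequence of integers `J` with `J 0 = 0` and
`J (k+1) ≡ J k (mod p^k)`, the map `ξ_J` is well defined, takes integer values, is
symmetric, vanishes when one argument is `0`, and satisfies the 2-cocycle identity:
it is a Schur multiplier of `ℤ[1/p]`. -/
theorem xiJ_is_schur_multiplier (p : ℕ) (hp : 1 < p) (J : ℕ → ℤ) (hJ : IsPAdicSeq p J) :
    ∃ ξ : pAdicRat p → pAdicRat p → ℚ,
      XiJFormula p J ξ ∧
      (∀ r s : pAdicRat p, ∃ z : ℤ, ξ r s = z) ∧
      (∀ r s : pAdicRat p, ξ r s = ξ s r) ∧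
      (∀ r : pAdicRat p, ξ r 0 = 0 ∧ ξ 0 r = 0) ∧
      (∀ r s t : pAdicRat p, ξ r s + ξ (r + s) t = ξ r (s + t) + ξ s t) := by
  open pAdicRat in
  exact ⟨addCoboundary (mulSeq J),
    xiJFormula_addCoboundary_mulSeq (zero_lt_one.trans hp).ne' J,
    exists_int_eq_addCoboundary_mulSeq hJ.2,
    addCoboundary_comm (mulSeq J),
    fun r ↦ ⟨(addCoboundary_zero_right (mulSeq J) r).trans (mulSeq_zero J),
      (addCoboundary_zero_left (mulSeq J) r).trans (mulSeq_zero J)⟩,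
    addCoboundary_cocycle (mulSeq J)⟩
end

section
/- Let p be a natural number with p > 1 and let J = (J_k) and K = (K_k) be sequences of integers with J_0 = K_0 = 0, J_{k+1} ≡ J_k (mod p^k) and K_{k+1} ≡ K_k (mod p^k) for all k. The Schur multipliers ξ_J and ξ_K of ℤ[1/p] are cohomologous if and only if there exists m ∈ ℤ such that J_k ≡ K_k + m (mod p^k) for all k ∈ ℕ (i.e. the p-adic integer J − K is the image of an ordinary integer). -/
open scoped Real

/-!
The multiplier `ξ_J` is the coboundary of the rational-valued function
`q / p ^ k ↦ (q / p ^ k) * J k`. Hence an integer-valued `f` has coboundary `ξ_J - ξ_K` if and only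
if `(q / p ^ k) * (J k - K k)` differs from `f (q / p ^ k)` by an additive map `ℤ[1/p] → ℚ`, that
is, by multiplication by some rational `c`. For a given `c`, such an `f` exists if and only if every
`(q / p ^ k) * (J k - K k - c)` is an integer: at `1` this says that `c` is an integer, and at
`1 / p ^ k` that `J k ≡ K k + c (mod p ^ k)`.
-/

section AddSubgroupRat

variable {V : Type*} [AddCommGroup V] [Module ℚ V] {A : AddSubgroup ℚ}

theorem smul_addMonoidHom_comm (φ : A →+ V) (a b : A) : (b : ℚ) • φ a = (a : ℚ) • φ b := by
  have h_den : ((a : ℚ).den * (b : ℚ).den : ℚ) ≠ 0 := by simp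
  have h_common : ((a : ℚ).den * (b : ℚ).num) • a = ((b : ℚ).den * (a : ℚ).num) • b := by
    ext
    push_cast [zsmul_eq_mul]
    linear_combination ((b : ℚ).num : ℚ) * Rat.mul_den_eq_num (a : ℚ) -
      ((a : ℚ).num : ℚ) * Rat.mul_den_eq_num (b : ℚ)
  have h_left : ((a : ℚ).den * (b : ℚ).den * b : ℚ) = ((a : ℚ).den * (b : ℚ).num : ℤ) := by
    push_cast
    rw [mul_assoc, Rat.den_mul_eq_num]
  have h_right : ((a : ℚ).den * (b : ℚ).den * a : ℚ) = ((b : ℚ).den * (a : ℚ).num : ℤ) := by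
    push_cast
    rw [mul_right_comm, Rat.den_mul_eq_num, mul_comm]
  refine smul_right_injective V h_den ?_
  simp only [smul_smul, h_left, h_right, Int.cast_smul_eq_zsmul, ← map_zsmul, h_common]

theorem exists_addMonoidHom_eq_smul (φ : A →+ V) : ∃ v : V, ∀ a : A, φ a = (a : ℚ) • v := by
  by_cases hA : ∃ b : A, b ≠ 0
  · obtain ⟨b, hb⟩ := hA
    have hb' : (b : ℚ) ≠ 0 := by simpa using hb
    refine ⟨(b : ℚ)⁻¹ • φ b, fun a => ?_⟩
    rw [smul_comm, ← smul_addMonoidHom_comm, inv_smul_smul₀ hb']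
  · push Not at hA
    exact ⟨0, fun a => by simp [hA a]⟩

theorem coboundary_eq_iff_exists_eq_add_smul {f g : A → V} :
    (∀ r s, f r + f s - f (r + s) = g r + g s - g (r + s)) ↔
      ∃ v : V, ∀ r : A, f r = g r + (r : ℚ) • v := by
  constructor
  · intro h
    have h_add (r s : A) : f (r + s) - g (r + s) = f r - g r + (f s - g s) := by
      rw [sub_add_sub_comm, sub_eq_sub_iff_sub_eq_sub, ← neg_inj, neg_sub, neg_sub, h]
    obtain ⟨v, hv⟩ := exists_addMonoidHom_eq_smul (AddMonoidHom.mk' (fun r => f r - g r) h_add)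
    exact ⟨v, fun r => sub_eq_iff_eq_add'.1 (hv r)⟩
  · rintro ⟨v, hv⟩ r s
    rw [hv, hv, hv, AddSubgroup.coe_add, add_smul]
    abel

end AddSubgroupRat

namespace pAdicRat

variable {p : ℕ}

/-- The exponent `k` of the reduced form `q / p ^ k` of an element `r` of `ℤ[1/p]`, encoded as the
least `k` for which `r * p ^ k` is an integer. -/
noncomputable def exponent (r : pAdicRat p) : ℕ :=
  sInf {k : ℕ | ∃ z : ℤ, (r : ℚ) * (p : ℚ) ^ k = z}

theorem exponent_le_iff {r : pAdicRat p} {k : ℕ} :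
    exponent r ≤ k ↔ ∃ z : ℤ, (r : ℚ) * (p : ℚ) ^ k = z := by
  refine ⟨fun hk => ?_, fun hk => Nat.sInf_le hk⟩
  have h_nonempty : {k : ℕ | ∃ z : ℤ, (r : ℚ) * (p : ℚ) ^ k = z}.Nonempty :=
    exists_comm.1 r.2
  obtain ⟨z, hz⟩ : ∃ z : ℤ, (r : ℚ) * (p : ℚ) ^ exponent r = z := Nat.sInf_mem h_nonempty
  refine ⟨z * (p : ℤ) ^ (k - exponent r), ?_⟩
  push_cast
  rw [← hz, mul_assoc, ← pow_add, Nat.add_sub_cancel' hk]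

theorem exponent_neg (r : pAdicRat p) : exponent (-r) = exponent r := by
  have h_le (s : pAdicRat p) : exponent (-s) ≤ exponent s := by
    obtain ⟨z, hz⟩ := exponent_le_iff.1 (le_refl (exponent s))
    exact exponent_le_iff.2 ⟨-z, by push_cast; rw [neg_mul, hz]⟩
  exact (h_le r).antisymm (by simpa only [neg_neg] using h_le (-r))

theorem exponent_add_le (r s : pAdicRat p) :
    exponent (r + s) ≤ max (exponent r) (exponent s) := by
  obtain ⟨y, hy⟩ := exponent_le_iff.1 (le_max_left (exponent r) (exponent s))
  obtain ⟨z, hz⟩ := exponent_le_iff.1 (le_max_right (exponent r) (exponent s))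
  exact exponent_le_iff.2 ⟨y + z, by push_cast; rw [add_mul, hy, hz]⟩

theorem exponent_add_of_lt {r s : pAdicRat p} (h : exponent r < exponent s) :
    exponent (r + s) = exponent s := by
  have h_le := exponent_add_le r s
  have h_ge := exponent_add_le (-r) (r + s)
  rw [neg_add_cancel_left, exponent_neg] at h_ge
  omega

theorem exists_isReducedForm_exponent (hp : p ≠ 0) (r : pAdicRat p) :
    ∃ q : ℤ, IsReducedForm p r q (exponent r) := by
  have hp' : (p : ℚ) ≠ 0 := Nat.cast_ne_zero.2 hp
  obtain ⟨q, hq⟩ := exponent_le_iff.1 (le_refl (exponent r))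
  refine ⟨q, eq_div_of_mul_eq (pow_ne_zero _ hp') hq, or_iff_not_imp_left.2 ?_⟩
  rintro h_ne ⟨z, rfl⟩
  obtain ⟨k, hk⟩ := Nat.exists_eq_succ_of_ne_zero h_ne
  have h_le : exponent r ≤ k := by
    refine exponent_le_iff.2 ⟨z, mul_right_cancel₀ hp' ?_⟩
    rw [hk, pow_succ] at hq
    push_cast at hq
    linear_combination hq
  omega

/-- The element `1 / p ^ k` of `ℤ[1/p]`, at which integrality conditions become congruences modulo
`p ^ k`. It equals `0` when `p = 0 < k`. -/
def invPow (p k : ℕ) : pAdicRat p :=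
  ⟨1 / (p : ℚ) ^ k, by
    by_cases h : (p : ℚ) ^ k = 0
    · exact ⟨0, 0, by simp [h]⟩
    · exact ⟨1, k, by simp [h]⟩⟩

theorem exponent_invPow (hp : 1 < p) (k : ℕ) : exponent (invPow p k) = k := by
  have hp' : (p : ℚ) ≠ 0 := by positivity
  refine le_antisymm (exponent_le_iff.2 ⟨1, by simp [invPow, hp']⟩) ?_
  obtain ⟨z, hz⟩ := exponent_le_iff.1 (le_refl (exponent (invPow p k)))
  have h_pow : (p : ℚ) ^ exponent (invPow p k) = p ^ k * z := by
    rw [← hz, invPow, one_div_mul_eq_div, mul_div_cancel₀ _ (pow_ne_zero _ hp')]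
  have h_dvd : (p : ℤ) ^ k ∣ (p : ℤ) ^ exponent (invPow p k) := ⟨z, by exact_mod_cast h_pow⟩
  exact (Nat.pow_dvd_pow_iff_le_right hp).1 (by exact_mod_cast h_dvd)

/-- The function `q / p ^ k ↦ (q / p ^ k) * J k` on reduced forms, a rational-valued cochain with
coboundary `ξ_J`. -/
noncomputable def primitive (J : ℕ → ℤ) (r : pAdicRat p) : ℚ :=
  r * J (exponent r)

theorem primitive_sub (J K : ℕ → ℤ) (r : pAdicRat p) :
    primitive (J - K) r = primitive J r - primitive K r := by
  simp only [primitive, Pi.sub_apply, Int.cast_sub, mul_sub]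

theorem primitive_invPow (hp : 1 < p) (L : ℕ → ℤ) (k : ℕ) :
    primitive L (invPow p k) = L k / (p : ℚ) ^ k := by
  rw [primitive, exponent_invPow hp, invPow, one_div_mul_eq_div]

theorem forall_primitive_eq_int_add_mul_iff (hp : 1 < p) (L : ℕ → ℤ) (c : ℚ) :
    (∀ r : pAdicRat p, ∃ n : ℤ, primitive L r = n + r * c) ↔
      ∃ m : ℤ, c = m ∧ ∀ k, (p : ℤ) ^ k ∣ L k - m := by
  have hp' : (p : ℚ) ≠ 0 := by positivity
  constructor
  · intro h
    have h_pow (k : ℕ) : ∃ n : ℤ, (L k : ℚ) = p ^ k * n + c := by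
      obtain ⟨n, hn⟩ := h (invPow p k)
      have hpk := pow_ne_zero k hp'
      rw [primitive_invPow hp, invPow, div_eq_iff hpk, add_mul, mul_right_comm (1 / (p : ℚ) ^ k),
        one_div_mul_cancel hpk, one_mul, mul_comm] at hn
      exact ⟨n, hn⟩
    obtain ⟨n₀, h_zero⟩ := h_pow 0
    obtain rfl : c = (L 0 - n₀ : ℤ) := by
      push_cast
      linear_combination -h_zero
    refine ⟨L 0 - n₀, rfl, fun k => ?_⟩
    obtain ⟨n, hn⟩ := h_pow k
    exact ⟨n, sub_eq_iff_eq_add.2 (by exact_mod_cast hn)⟩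
  · rintro ⟨m, rfl, hm⟩ r
    obtain ⟨z, hz⟩ := exponent_le_iff.1 (le_refl (exponent r))
    obtain ⟨w, hw⟩ := hm (exponent r)
    have hw' : (L (exponent r) : ℚ) - m = p ^ exponent r * w := by exact_mod_cast hw
    refine ⟨z * w, ?_⟩
    rw [primitive]
    push_cast
    linear_combination (r : ℚ) * hw' + w * hz

end pAdicRat

open pAdicRat

theorem XiJFormula.eq_coboundary_primitive {p : ℕ} (hp : p ≠ 0) {J : ℕ → ℤ}
    {ξ : pAdicRat p → pAdicRat p → ℚ} (hξ : XiJFormula p J ξ) (r s : pAdicRat p) :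
    ξ r s = primitive J r + primitive J s - primitive J (r + s) := by
  obtain ⟨q₁, hr⟩ := exists_isReducedForm_exponent hp r
  obtain ⟨q₂, hs⟩ := exists_isReducedForm_exponent hp s
  obtain ⟨q, hrs⟩ := exists_isReducedForm_exponent hp (r + s)
  obtain ⟨h_lt, h_gt, h_eq⟩ := hξ r s q₁ _ q₂ _ hr hs
  unfold primitive
  rcases lt_trichotomy (exponent r) (exponent s) with h | h | h
  · rw [h_lt h, ← hr.1, exponent_add_of_lt h]
    push_cast
    ring
  · rw [h_eq h q _ hrs, ← hrs.1, h]
    push_cast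
    ring
  · rw [h_gt h, ← hs.1, add_comm r s, exponent_add_of_lt h]
    push_cast
    ring

theorem xiJ_cohomologous_iff_general (p : ℕ) (hp : 1 < p) (J K : ℕ → ℤ)
    (ξJ ξK : pAdicRat p → pAdicRat p → ℚ)
    (hξJ : XiJFormula p J ξJ) (hξK : XiJFormula p K ξK) :
    (∃ f : pAdicRat p → ℤ, ∀ r s : pAdicRat p,
        ξJ r s - ξK r s = ((f r : ℚ) + f s - f (r + s))) ↔
      ∃ m : ℤ, ∀ k : ℕ, (p : ℤ) ^ k ∣ (J k - (K k + m)) := by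
  have h_coboundary (r s : pAdicRat p) : ξJ r s - ξK r s =
      primitive (J - K) r + primitive (J - K) s - primitive (J - K) (r + s) := by
    rw [hξJ.eq_coboundary_primitive (by omega), hξK.eq_coboundary_primitive (by omega)]
    simp only [primitive_sub]
    ring
  simp only [h_coboundary]
  calc
    _ ↔ ∃ f : pAdicRat p → ℤ, ∃ c : ℚ, ∀ r, primitive (J - K) r = f r + r * c :=
      exists_congr fun f => coboundary_eq_iff_exists_eq_add_smul (g := fun r => (f r : ℚ))
    _ ↔ ∃ c : ℚ, ∀ r : pAdicRat p, ∃ n : ℤ, primitive (J - K) r = n + r * c := by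
      simp only [Classical.skolem, exists_comm (α := ℚ)]
    _ ↔ ∃ c : ℚ, ∃ m : ℤ, c = m ∧ ∀ k, (p : ℤ) ^ k ∣ (J - K) k - m :=
      exists_congr fun c => forall_primitive_eq_int_add_mul_iff hp (J - K) c
    _ ↔ ∃ m : ℤ, ∀ k, (p : ℤ) ^ k ∣ J k - (K k + m) := by
      simp only [exists_comm (α := ℚ), exists_eq_left, Pi.sub_apply, sub_sub]

/-- For `p > 1` and `p`-adic integers `J`, `K` (given as integer sequences with
`J 0 = K 0 = 0`, `J (k+1) ≡ J k (mod p^k)`, `K (k+1) ≡ K k (mod p^k)`), the Schur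
multipliers `ξ_J` and `ξ_K` of `ℤ[1/p]` are cohomologous if and only if there is `m ∈ ℤ`
with `J k ≡ K k + m (mod p^k)` for all `k`, i.e. `J - K` is the image of an integer. -/
theorem xiJ_cohomologous_iff (p : ℕ) (hp : 1 < p) (J K : ℕ → ℤ)
    (hJ : IsPAdicSeq p J) (hK : IsPAdicSeq p K)
    (ξJ ξK : pAdicRat p → pAdicRat p → ℚ)
    (hξJ : XiJFormula p J ξJ) (hξK : XiJFormula p K ξK) :
    (∃ f : pAdicRat p → ℤ, ∀ r s : pAdicRat p,
        ξJ r s - ξK r s = ((f r : ℚ) + f s - f (r + s))) ↔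
      ∃ m : ℤ, ∀ k : ℕ, (p : ℤ) ^ k ∣ (J k - (K k + m)) :=
  xiJ_cohomologous_iff_general p hp J K ξJ ξK hξJ hξK
end

section
/- Let p be a natural number with p > 1 and let J = (J_k)_{k∈ℕ} be a sequence of integers with J_0 = 0 and J_{k+1} ≡ J_k (mod p^k) for all k. Then the operation ⊞ makes ℤ × ℤ[1/p] into an abelian group 𝒬_J with identity (0,0); the map ℤ → 𝒬_J, z ↦ (z,0), is an injective group homomorphism; the map 𝒬_J → ℤ[1/p], (z,r) ↦ r, is a surjective group homomorphism; and the kernel of the latter equals the image of the former. Thus 𝒬_J is an abelian extension of ℤ[1/p] by ℤ. -/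
open scoped Real

/-- The group operation `⊞` of `𝒬_J` on `ℤ × ℤ[1/p]`:
`(z1, r1) ⊞ (z2, r2) = (z1 + z2 + ξ_J(r1, r2), r1 + r2)`. -/
def qOp (p : ℕ) (ξ : pAdicRat p → pAdicRat p → ℤ) :
    ℤ × pAdicRat p → ℤ × pAdicRat p → ℤ × pAdicRat p :=
  fun a b => (a.1 + b.1 + ξ a.2 b.2, a.2 + b.2)

/-! Over `ℚ` the cocycle `ξ_J` is the coboundary of `r ↦ r * J_k`, where `k` is the exponent of
the reduced denominator `p ^ k` of `r`. The case distinction in `ξ_J` reflects that this exponent is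
non-archimedean: the exponent of `r + s` is the larger of those of `r` and `s` when they differ.
A coboundary is a symmetric cocycle, and `ℤ → ℚ` is injective, so `ξ_J` is one too. -/

section Coboundary

variable {G B : Type*} [AddCommGroup B]

/-- The coboundary `(r, s) ↦ f r + f s - f (r + s)` of a `1`-cochain `f`, for the trivial action. -/
def coboundary [Add G] (f : G → B) (r s : G) : B :=
  f r + f s - f (r + s)

theorem coboundary_comm [AddCommMagma G] (f : G → B) (r s : G) :
    coboundary f r s = coboundary f s r := by
  simp only [coboundary, add_comm]

theorem coboundary_add_coboundary [AddSemigroup G] (f : G → B) (r s t : G) :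
    coboundary f r s + coboundary f (r + s) t = coboundary f s t + coboundary f r (s + t) := by
  simp only [coboundary, add_assoc r s t]
  abel

theorem coboundary_zero_right [AddZeroClass G] (f : G → B) (r : G) :
    coboundary f r 0 = f 0 := by
  simp only [coboundary, add_zero, add_sub_cancel_left]

end Coboundary

section TwistedAdd

variable {A G : Type*} {ξ : G → G → A}

/-- The operation on `A × G` twisted by `ξ`; it defines the extension of `G` by `A` with factor
set `ξ`. The operation `qOp p ξ` is by definition the case `A = ℤ`, `G = ℤ[1/p]`. -/
def twistedAdd [Add A] [Add G] (ξ : G → G → A) (a b : A × G) : A × G :=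
  (a.1 + b.1 + ξ a.2 b.2, a.2 + b.2)

theorem twistedAdd_comm [AddCommMagma A] [AddCommMagma G] (hξ : ∀ r s, ξ r s = ξ s r)
    (a b : A × G) : twistedAdd ξ a b = twistedAdd ξ b a := by
  simp only [twistedAdd, hξ a.2 b.2, add_comm]

theorem twistedAdd_assoc [AddCommSemigroup A] [AddSemigroup G]
    (hξ : ∀ r s t, ξ r s + ξ (r + s) t = ξ s t + ξ r (s + t)) (a b c : A × G) :
    twistedAdd ξ (twistedAdd ξ a b) c = twistedAdd ξ a (twistedAdd ξ b c) := by
  refine Prod.ext ?_ (add_assoc a.2 b.2 c.2)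
  calc a.1 + b.1 + ξ a.2 b.2 + c.1 + ξ (a.2 + b.2) c.2
      = a.1 + b.1 + c.1 + (ξ a.2 b.2 + ξ (a.2 + b.2) c.2) := by ac_rfl
    _ = a.1 + b.1 + c.1 + (ξ b.2 c.2 + ξ a.2 (b.2 + c.2)) := by rw [hξ]
    _ = a.1 + (b.1 + c.1 + ξ b.2 c.2) + ξ a.2 (b.2 + c.2) := by ac_rfl

theorem twistedAdd_zero [AddZeroClass A] [AddZeroClass G] (hξ : ∀ r, ξ r 0 = 0) (a : A × G) :
    twistedAdd ξ a (0, 0) = a := by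
  simp only [twistedAdd, hξ, add_zero]

theorem twistedAdd_inl [AddZeroClass A] [AddZeroClass G] (hξ : ξ 0 0 = 0) (x y : A) :
    twistedAdd ξ (x, 0) (y, 0) = (x + y, 0) := by
  simp only [twistedAdd, hξ, add_zero]

theorem exists_twistedAdd_eq_zero [AddCommGroup A] [AddGroup G] (ξ : G → G → A) (a : A × G) :
    ∃ b, twistedAdd ξ a b = (0, 0) := by
  refine ⟨(-a.1 - ξ a.2 (-a.2), -a.2), Prod.ext ?_ (add_neg_cancel a.2)⟩
  simp only [twistedAdd]
  abel

end TwistedAdd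

section DenomExponent

variable {p : ℕ}

/-- The subgroup `p ^ (-k) ℤ` of `ℚ`, encoded as `{r | r * p ^ k ∈ ℤ}`, which is `⊤` for
`p = 0 < k`. -/
def powDenom (p k : ℕ) : AddSubgroup ℚ :=
  (Int.castAddHom ℚ).range.comap (AddMonoidHom.mulRight ((p : ℚ) ^ k))

theorem mem_powDenom {k : ℕ} {r : ℚ} : r ∈ powDenom p k ↔ ∃ z : ℤ, z = r * (p : ℚ) ^ k :=
  Iff.rfl

theorem powDenom_mono (p : ℕ) : Monotone (powDenom p) := by
  refine monotone_nat_of_le_succ fun k r hr ↦ ?_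
  obtain ⟨z, hz⟩ := mem_powDenom.1 hr
  exact mem_powDenom.2 ⟨z * p, by push_cast; rw [hz, pow_succ, mul_assoc]⟩

/-- The exponent of the denominator in the reduced form of `r`, encoded as the least `k` such that
`r * p ^ k` is an integer. -/
noncomputable def denomExponent (r : pAdicRat p) : ℕ :=
  sInf {k | (r : ℚ) ∈ powDenom p k}

theorem mem_powDenom_denomExponent (r : pAdicRat p) : (r : ℚ) ∈ powDenom p (denomExponent r) := by
  obtain ⟨z, k, hz⟩ := r.2
  exact Nat.sInf_mem (s := {k | (r : ℚ) ∈ powDenom p k}) ⟨k, z, hz.symm⟩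

theorem denomExponent_le_iff {r : pAdicRat p} {k : ℕ} :
    denomExponent r ≤ k ↔ (r : ℚ) ∈ powDenom p k :=
  ⟨fun h ↦ powDenom_mono p h (mem_powDenom_denomExponent r), fun h ↦ Nat.sInf_le h⟩

theorem denomExponent_add_le (r s : pAdicRat p) :
    denomExponent (r + s) ≤ max (denomExponent r) (denomExponent s) :=
  denomExponent_le_iff.2 <| add_mem (denomExponent_le_iff.1 (le_max_left _ _))
    (denomExponent_le_iff.1 (le_max_right _ _))

theorem denomExponent_neg (r : pAdicRat p) : denomExponent (-r) = denomExponent r := by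
  simp only [denomExponent, NegMemClass.coe_neg, neg_mem_iff]

theorem denomExponent_add_of_lt {r s : pAdicRat p} (h : denomExponent r < denomExponent s) :
    denomExponent (r + s) = denomExponent s := by
  have h_sum := denomExponent_add_le r s
  have h_diff := denomExponent_add_le (-r) (r + s)
  rw [neg_add_cancel_left, denomExponent_neg] at h_diff
  omega

theorem exists_isReducedForm_denomExponent (hp : p ≠ 0) (r : pAdicRat p) :
    ∃ q : ℤ, IsReducedForm p r q (denomExponent r) := by
  have hp' : (p : ℚ) ≠ 0 := Nat.cast_ne_zero.2 hp
  obtain ⟨q, hq⟩ := mem_powDenom.1 (mem_powDenom_denomExponent r)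
  refine ⟨q, eq_div_of_mul_eq (pow_ne_zero _ hp') hq.symm, ?_⟩
  rcases h_exp : denomExponent r with _ | k
  · exact Or.inl rfl
  · refine Or.inr ?_
    rintro ⟨w, rfl⟩
    have hw : (w : ℚ) = r * (p : ℚ) ^ k := mul_left_cancel₀ hp' <| by
      rw [h_exp, pow_succ] at hq
      push_cast at hq
      linear_combination hq
    have h_le : denomExponent r ≤ k := denomExponent_le_iff.2 ⟨w, hw⟩
    omega

end DenomExponent

/-- The `1`-cochain `r ↦ r * J_k`, with `k` the exponent of `r`, that trivializes `ξ_J` over `ℚ`. -/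
noncomputable def xiPrimitive {p : ℕ} (J : ℕ → ℤ) (r : pAdicRat p) : ℚ :=
  r * J (denomExponent r)

theorem xiPrimitive_zero {p : ℕ} (J : ℕ → ℤ) : xiPrimitive J (0 : pAdicRat p) = 0 :=
  zero_mul _

theorem XiJFormula.eq_coboundary {p : ℕ} (hp : p ≠ 0) {J : ℕ → ℤ}
    {ξ : pAdicRat p → pAdicRat p → ℚ} (hξ : XiJFormula p J ξ) (r s : pAdicRat p) :
    ξ r s = coboundary (xiPrimitive J) r s := by
  obtain ⟨q₁, hr⟩ := exists_isReducedForm_denomExponent hp r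
  obtain ⟨q₂, hs⟩ := exists_isReducedForm_denomExponent hp s
  obtain ⟨q, hrs⟩ := exists_isReducedForm_denomExponent hp (r + s)
  obtain ⟨h_lt, h_gt, h_eq⟩ := hξ r s _ _ _ _ hr hs
  simp only [coboundary, xiPrimitive]
  rcases lt_trichotomy (denomExponent r) (denomExponent s) with h | h | h
  · rw [h_lt h, ← hr.1, denomExponent_add_of_lt h, AddSubgroup.coe_add]
    ring
  · rw [h_eq h _ _ hrs, ← hrs.1, AddSubgroup.coe_add, ← h]
    ring
  · rw [h_gt h, ← hs.1, add_comm r s, denomExponent_add_of_lt h, AddSubgroup.coe_add]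
    ring

/-- For `p > 1` and a `p`-adic integer `J`, the operation `⊞` makes
`ℤ × ℤ[1/p]` into an abelian group `𝒬_J` with identity `(0,0)`; `z ↦ (z,0)` is an
injective group homomorphism into it, `(z,r) ↦ r` is a surjective group homomorphism
onto `ℤ[1/p]`, and the kernel of the latter is the image of the former: `𝒬_J` is an
abelian extension of `ℤ[1/p]` by `ℤ`. -/
theorem qJ_is_abelian_extension (p : ℕ) (hp : 1 < p) (J : ℕ → ℤ) (hJ : IsPAdicSeq p J)
    (ξ : pAdicRat p → pAdicRat p → ℤ)
    (hξ : XiJFormula p J (fun r s => (ξ r s : ℚ))) :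
    (∀ a b : ℤ × pAdicRat p, qOp p ξ a b = qOp p ξ b a) ∧
    (∀ a b c : ℤ × pAdicRat p, qOp p ξ (qOp p ξ a b) c = qOp p ξ a (qOp p ξ b c)) ∧
    (∀ a : ℤ × pAdicRat p, qOp p ξ a (0, 0) = a) ∧
    (∀ a : ℤ × pAdicRat p, ∃ b : ℤ × pAdicRat p, qOp p ξ a b = (0, 0)) ∧
    Function.Injective (fun z : ℤ => ((z, 0) : ℤ × pAdicRat p)) ∧
    (∀ z1 z2 : ℤ, ((z1 + z2, 0) : ℤ × pAdicRat p) = qOp p ξ (z1, 0) (z2, 0)) ∧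
    Function.Surjective (fun a : ℤ × pAdicRat p => a.2) ∧
    (∀ a b : ℤ × pAdicRat p, (qOp p ξ a b).2 = a.2 + b.2) ∧
    (∀ a : ℤ × pAdicRat p, a.2 = 0 ↔ ∃ z : ℤ, a = (z, 0)) := by
  have hδ : ∀ r s, (ξ r s : ℚ) = coboundary (xiPrimitive J) r s :=
    hξ.eq_coboundary (Nat.ne_zero_of_lt hp)
  have h_symm : ∀ r s, ξ r s = ξ s r := fun r s ↦ by
    exact_mod_cast (by simp only [hδ, coboundary_comm _ r s] : (ξ r s : ℚ) = ξ s r)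
  have h_cocycle : ∀ r s t, ξ r s + ξ (r + s) t = ξ s t + ξ r (s + t) := fun r s t ↦ by
    have h := coboundary_add_coboundary (xiPrimitive J) r s t
    simp only [← hδ] at h
    exact_mod_cast h
  have h_zero : ∀ r, ξ r 0 = 0 := fun r ↦ by
    exact_mod_cast (hδ r 0).trans ((coboundary_zero_right _ r).trans (xiPrimitive_zero J))
  exact ⟨twistedAdd_comm h_symm, twistedAdd_assoc h_cocycle, twistedAdd_zero h_zero,
    exists_twistedAdd_eq_zero ξ, Prod.mk_left_injective 0,
    fun x y ↦ (twistedAdd_inl (h_zero 0) x y).symm, Prod.snd_surjective, fun _ _ ↦ rfl,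
    fun a ↦ ⟨fun h ↦ ⟨a.1, Prod.ext rfl h⟩, fun ⟨_, h⟩ ↦ congrArg Prod.snd h⟩⟩
end

section
/- Let p be a natural number with p > 1 and let α ∈ Ξ_p. For each k ∈ ℕ set J_k = p^k·α_k − α_0. Then J_k is an integer for every k, J_0 = 0, and J_{k+1} ≡ J_k (mod p^k) for all k ∈ ℕ (so J = (J_k) defines a p-adic integer). -/
/-! The integers `j_i = p α_{i+1} - α_i` are the `p`-adic digits of `J`: multiplying by `p ^ i` and
summing over `i < k` telescopes to `p ^ k α_k - α_0`, so `J_k` is the `k`-th partial sum of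
`∑ j_i p ^ i`. -/

theorem sum_range_pow_mul_mul_sub {R : Type*} [Ring R] (c : R) (a : ℕ → R) (k : ℕ) :
    ∑ i ∈ Finset.range k, c ^ i * (c * a (i + 1) - a i) = c ^ k * a k - a 0 := by
  simpa [mul_sub, pow_succ, mul_assoc] using Finset.sum_range_sub (fun i ↦ c ^ i * a i) k

theorem xi_gives_padic_integer_general {R : Type*} [Ring R] (p : ℤ) (α : ℕ → R)
    (hα : ∀ n, ∃ j : ℤ, (p : R) * α (n + 1) - α n = j) :
    ∃ J : ℕ → ℤ,
      (∀ k : ℕ, (J k : R) = (p : R) ^ k * α k - α 0) ∧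
      J 0 = 0 ∧
      ∀ k : ℕ, p ^ k ∣ (J (k + 1) - J k) := by
  choose j hj using hα
  refine ⟨fun k ↦ ∑ i ∈ Finset.range k, p ^ i * j i, fun k ↦ ?_, Finset.sum_range_zero _,
    fun k ↦ ?_⟩
  · simp only [Int.cast_sum, Int.cast_mul, Int.cast_pow, ← hj, sum_range_pow_mul_mul_sub]
  · rw [Finset.sum_range_succ_sub_sum]
    exact dvd_mul_right _ _

/-- For `p > 1` and `α ∈ Ξ_p`, setting `J_k = p^k α_k - α_0`, each `J_k` is
an integer, `J_0 = 0`, and `J_{k+1} ≡ J_k (mod p^k)` for all `k`, so `J` defines a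
`p`-adic integer. -/
theorem xi_gives_padic_integer (p : ℕ) (hp : 1 < p) (α : ℕ → ℝ) (hα : XiSeq p α) :
    ∃ J : ℕ → ℤ,
      (∀ k : ℕ, (J k : ℝ) = (p : ℝ) ^ k * α k - α 0) ∧
      J 0 = 0 ∧
      ∀ k : ℕ, (p : ℤ) ^ k ∣ (J (k + 1) - J k) := by
  have h_digit (n : ℕ) : ∃ j : ℤ, ((p : ℤ) : ℝ) * α (n + 1) - α n = j :=
    (hα.2 n).imp' Nat.cast fun _ hj ↦ mod_cast hj.2
  exact mod_cast xi_gives_padic_integer_general p α h_digit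
end

section
/- Let p be a natural number with p > 1 and let α : ℕ → ℝ be a sequence such that p·α_{n+1} − α_n ∈ ℤ for all n ∈ ℕ. Then the additive subgroup of ℝ generated by the set {1} ∪ {α_k : k ∈ ℕ} equals {z + y·α_k : z, y ∈ ℤ, k ∈ ℕ}. -/
/-!
The relation `p α_{n+1} - α_n ∈ ℤ` places `α_n` in the subgroup generated by `1` and `α_{n+1}`.
Hence the subgroups generated by the pairs `{1, α_k}` increase with `k`, and the subgroup they
generate together is simply their union.
-/

theorem closure_insert_range_eq_iSup {G ι : Type*} [AddGroup G] [Nonempty ι] (g : G) (a : ι → G) :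
    AddSubgroup.closure (insert g (Set.range a)) = ⨆ i, AddSubgroup.closure {g, a i} := by
  simp only [← AddSubgroup.closure_iUnion, ← Set.iUnion_singleton_eq_range, Set.insert_eq,
    Set.union_iUnion]

theorem monotone_closure_pair {G : Type*} [AddGroup G] {g : G} {a : ℕ → G}
    (ha : ∀ n, a n ∈ AddSubgroup.closure {g, a (n + 1)}) :
    Monotone fun n ↦ AddSubgroup.closure {g, a n} :=
  monotone_nat_of_le_succ fun n ↦ (AddSubgroup.closure_le _).2 <|
    Set.pair_subset (AddSubgroup.mem_closure_of_mem (Set.mem_insert _ _)) (ha n)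

theorem mem_closure_insert_range_iff_of_directed {A ι : Type*} [AddCommGroup A] [Nonempty ι]
    {g : A} {a : ι → A} (ha : Directed (· ≤ ·) fun i ↦ AddSubgroup.closure {g, a i}) {x : A} :
    x ∈ AddSubgroup.closure (insert g (Set.range a)) ↔
      ∃ (i : ι) (z y : ℤ), z • g + y • a i = x := by
  simp only [closure_insert_range_eq_iSup, AddSubgroup.mem_iSup_of_directed ha,
    AddSubgroup.mem_closure_pair]

theorem trace_range_description_general {A : Type*} [AddCommGroup A] (g : A) (p : ℕ → ℤ)
    (α : ℕ → A) (hα : ∀ n : ℕ, ∃ m : ℤ, p n • α (n + 1) - α n = m • g) (x : A) :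
    x ∈ AddSubgroup.closure ({g} ∪ Set.range α) ↔
      ∃ (z y : ℤ) (k : ℕ), x = z • g + y • α k := by
  have mem_closure_succ (n : ℕ) : α n ∈ AddSubgroup.closure {g, α (n + 1)} := by
    obtain ⟨m, hm⟩ := hα n
    refine AddSubgroup.mem_closure_pair.2 ⟨-m, p n, ?_⟩
    rw [neg_smul, ← hm]
    abel
  rw [← Set.insert_eq,
    mem_closure_insert_range_iff_of_directed (monotone_closure_pair mem_closure_succ).directed_le]
  exact ⟨fun ⟨k, z, y, h⟩ ↦ ⟨z, y, k, h.symm⟩, fun ⟨z, y, k, h⟩ ↦ ⟨k, z, y, h.symm⟩⟩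

/-- Let `p > 1` and let `α : ℕ → ℝ` satisfy `p α_{n+1} - α_n ∈ ℤ` for all
`n`. Then the additive subgroup of `ℝ` generated by `{1} ∪ {α_k : k ∈ ℕ}` is exactly
`{z + y α_k : z, y ∈ ℤ, k ∈ ℕ}`. -/
theorem trace_range_description (p : ℕ) (hp : 1 < p) (α : ℕ → ℝ)
    (hα : ∀ n : ℕ, ∃ m : ℤ, (p : ℝ) * α (n + 1) - α n = m) :
    ∀ x : ℝ, x ∈ AddSubgroup.closure ({1} ∪ Set.range α) ↔
      ∃ (z y : ℤ) (k : ℕ), x = z + y * α k := by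
  simpa only [zsmul_eq_mul, mul_one] using
    trace_range_description_general (1 : ℝ) (fun _ ↦ (p : ℤ)) α (by simpa using hα)
end

section
/- Let p be a prime number and let ι : ℤ[1/p] → ℚ_p × ℝ be defined by ι(r) = (r, −r), using the canonical embeddings of ℤ[1/p] into ℚ_p and into ℝ. Then ι is an injective group homomorphism, its image ι(ℤ[1/p]) is a discrete subgroup of the topological group ℚ_p × ℝ, and the quotient topological group (ℚ_p × ℝ)/ι(ℤ[1/p]) is isomorphic, as a topological group, to the p-solenoid 𝕊_p; in particular ι(ℤ[1/p]) is cocompact. -/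
open scoped Real

/-!
Let `χ` be the standard character of `ℚ_p`, so that `χ r = exp (2πir)` for `r ∈ ℤ[1/p]` and
`ker χ = ℤ_p`. The character `ψ (x, t) = χ x * exp (2πit)` of `ℚ_p × ℝ` is trivial on the lattice
`Γ = ι (ℤ[1/p])`, and its kernel is `Γ + ℤ_p × 0`. Since `ℚ_p × ℝ` is divisible, `ψ` lifts to the
homomorphism `v ↦ (ψ (v / p ^ n))ₙ` into the solenoid, whose kernel is
`⋂ₙ (Γ + p ^ n ℤ_p × 0) = Γ`. It maps the compact box `ℤ_p × [0, 1]` onto the solenoid: each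
coordinate is surjective on the box, and the first `n` coordinates are powers of the `n`-th, so
compactness yields a common preimage. Hence the quotient by `Γ` is compact, and the induced
continuous bijection onto the Hausdorff solenoid is a homeomorphism.
-/

section QuotientKer

variable {G A : Type*} [AddGroup G] [TopologicalSpace G] [AddGroup A]

lemma compactSpace_quotient_ker_of_surjOn {φ : G →+ A} {K : Set G} (hK : IsCompact K)
    (hφ : Set.SurjOn φ K Set.univ) : CompactSpace (G ⧸ φ.ker) where
  isCompact_univ := by
    suffices (QuotientAddGroup.mk '' K : Set (G ⧸ φ.ker)) = Set.univ from
      this ▸ hK.image continuous_quotient_mk'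
    refine Set.eq_univ_of_forall fun q => ?_
    obtain ⟨g, rfl⟩ := QuotientAddGroup.mk_surjective q
    obtain ⟨k, hk, hkg⟩ := hφ (Set.mem_univ (φ g))
    exact ⟨k, hk, QuotientAddGroup.eq.2 (φ.eq_iff.1 hkg.symm)⟩

/-- The first isomorphism theorem for topological groups, for a continuous surjection onto a
Hausdorff group with compact quotient `G ⧸ φ.ker`. -/
noncomputable def quotientKerContinuousAddEquiv [TopologicalSpace A] [T2Space A] (φ : G →+ A)
    [CompactSpace (G ⧸ φ.ker)] (hφ : Continuous φ) (hsurj : Function.Surjective φ) :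
    G ⧸ φ.ker ≃ₜ+ A :=
  have hcont : Continuous (QuotientAddGroup.quotientKerEquivOfSurjective φ hsurj).toEquiv :=
    hφ.quotient_lift _
  { QuotientAddGroup.quotientKerEquivOfSurjective φ hsurj with
    continuous_toFun := hcont
    continuous_invFun := hcont.continuous_symm_of_equiv_compact_to_t2 }

end QuotientKer

namespace solenoid

variable {p : ℕ} [NeZero p] {V : Type*} [AddCommGroup V] [Module ℚ V]

/-- The lift of a character `ψ` of a rational vector space to the solenoid, with `n`-th coordinate
`ψ (v / p ^ n)`. The solenoid is written additively so that this is a homomorphism of additive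
groups. -/
noncomputable def ofAddChar (p : ℕ) [NeZero p] (ψ : AddChar V Circle) :
    V →+ Additive (solenoid p) :=
  AddMonoidHom.mk'
    (fun v => Additive.ofMul ⟨fun n => ψ ((p ^ n : ℚ)⁻¹ • v), fun n => by
      have hp : (p : ℚ) ≠ 0 := NeZero.ne _
      rw [← ψ.map_nsmul_eq_pow, ← Nat.cast_smul_eq_nsmul ℚ, smul_smul, pow_succ,
        mul_inv_rev, mul_inv_cancel_left₀ hp]⟩)
    fun v w => Additive.toMul.injective <| Subtype.ext <| funext fun n => by
      simp only [smul_add, AddChar.map_add_eq_mul]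
      rfl

lemma ofAddChar_eq_iff {ψ : AddChar V Circle} {v : V} {z : Additive (solenoid p)} :
    ofAddChar p ψ v = z ↔ ∀ n, ψ ((p ^ n : ℚ)⁻¹ • v) = z.toMul.1 n :=
  Additive.toMul.injective.eq_iff.symm.trans (Subtype.ext_iff.trans funext_iff)

lemma mem_ker_ofAddChar {ψ : AddChar V Circle} {v : V} :
    v ∈ (ofAddChar p ψ).ker ↔ ∀ n : ℕ, ψ ((p ^ n : ℚ)⁻¹ • v) = 1 :=
  ofAddChar_eq_iff

variable [TopologicalSpace V] [ContinuousConstSMul ℚ V]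

lemma continuous_ofAddChar {ψ : AddChar V Circle} (hψ : Continuous ψ) :
    Continuous (ofAddChar p ψ) :=
  Continuous.subtype_mk (continuous_pi fun _ => hψ.comp (continuous_const_smul _)) _

lemma surjOn_ofAddChar [T2Space V] {ψ : AddChar V Circle} (hψ : Continuous ψ) {K : Set V}
    (hK : IsCompact K)
    (hsurj : ∀ n : ℕ, Set.SurjOn (fun v => ψ ((p ^ n : ℚ)⁻¹ • v)) K Set.univ) :
    Set.SurjOn (ofAddChar p ψ) K Set.univ := by
  intro z _
  let S : ℕ → Set V := fun n => K ∩ {v | ψ ((p ^ n : ℚ)⁻¹ • v) = z.toMul.1 n}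
  have hclosed (n : ℕ) : IsClosed {v | ψ ((p ^ n : ℚ)⁻¹ • v) = z.toMul.1 n} :=
    isClosed_eq (hψ.comp (continuous_const_smul _)) continuous_const
  have hanti (n : ℕ) : S (n + 1) ⊆ S n := by
    rintro v ⟨hvK, hv⟩
    refine ⟨hvK, ?_⟩
    calc ψ ((p ^ n : ℚ)⁻¹ • v)
        = ψ ((p ^ (n + 1) : ℚ)⁻¹ • v) ^ p := ((ofAddChar p ψ v).toMul.2 n).symm
      _ = z.toMul.1 (n + 1) ^ p := congrArg (· ^ p) hv
      _ = z.toMul.1 n := z.toMul.2 n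
  have hne (n : ℕ) : (S n).Nonempty := hsurj n (Set.mem_univ _)
  obtain ⟨v, hv⟩ := IsCompact.nonempty_iInter_of_sequence_nonempty_isCompact_isClosed S hanti hne
    (hK.inter_right (hclosed 0)) fun n => hK.isClosed.inter (hclosed n)
  rw [Set.mem_iInter] at hv
  exact ⟨v, (hv 0).1, ofAddChar_eq_iff.2 fun n => (hv n).2⟩

end solenoid

section Lattice

open scoped FourierTransform

lemma fourierChar_eq_one_iff {t : ℝ} : 𝐞 t = 1 ↔ ∃ m : ℤ, t = m := by
  have h : 2 * π ≠ 0 := Real.two_pi_pos.ne'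
  rw [Real.fourierChar_apply', Circle.exp_eq_one]
  exact exists_congr fun m => by rw [mul_comm (m : ℝ), mul_right_inj' h]

lemma fourierChar_surjective : Function.Surjective 𝐞 := fun z => by
  obtain ⟨s, rfl⟩ := Circle.exp_surjective z
  exact ⟨s / (2 * π), by rw [Real.fourierChar_apply', mul_div_cancel₀ _ Real.two_pi_pos.ne']⟩

namespace pAdicRat

lemma intCast_mem (p : ℕ) (m : ℤ) : (m : ℚ) ∈ pAdicRat p := ⟨m, 0, by simp⟩

lemma pow_mul_mem_iff {p : ℕ} (n : ℕ) {r : ℚ} :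
    (p : ℚ) ^ n * r ∈ pAdicRat p ↔ r ∈ pAdicRat p := by
  constructor
  · rintro ⟨z, k, h⟩
    exact ⟨z, n + k, by rw [← h]; ring⟩
  · rintro ⟨z, k, h⟩
    exact ⟨p ^ n * z, k, by push_cast; rw [← h]; ring⟩

lemma inv_pow_mul_mem {p : ℕ} [NeZero p] (n : ℕ) {r : ℚ} (hr : r ∈ pAdicRat p) :
    ((p : ℚ) ^ n)⁻¹ * r ∈ pAdicRat p := by
  have hpn : (p : ℚ) ^ n ≠ 0 := pow_ne_zero _ (NeZero.ne _)
  rwa [← pow_mul_mem_iff n, mul_inv_cancel_left₀ hpn]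

end pAdicRat

variable {p : ℕ} [Fact p.Prime]

lemma norm_inv_pow_mul_le_one_iff {n : ℕ} {x : ℚ_[p]} :
    ‖((p : ℚ_[p]) ^ n)⁻¹ * x‖ ≤ 1 ↔ ‖x‖ ≤ (p : ℝ)⁻¹ ^ n := by
  have hp : (0 : ℝ) < (p : ℝ) ^ n := pow_pos (Nat.cast_pos.2 (NeZero.pos p)) n
  rw [norm_mul, norm_inv, norm_pow, Padic.norm_p, inv_pow, inv_inv, mul_comm, ← le_div_iff₀ hp,
    one_div]

namespace pAdicRat

lemma exists_eq_intCast {r : ℚ} (hr : r ∈ pAdicRat p) (h : (r : ℚ_[p]) ∈ PadicInt.subring p) :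
    ∃ m : ℤ, r = m := by
  obtain ⟨z, k, hz⟩ := hr
  have hpk : (p : ℚ) ^ k ≠ 0 := pow_ne_zero _ (NeZero.ne _)
  have hrz : r = ((p : ℚ) ^ k)⁻¹ * z := by rw [← hz]; field_simp
  have hdvd : (p ^ k : ℤ) ∣ z := by
    rw [← Padic.norm_int_le_pow_iff_dvd, zpow_neg, zpow_natCast, ← inv_pow,
      ← norm_inv_pow_mul_le_one_iff]
    simpa [hrz, PadicInt.mem_subring_iff] using h
  obtain ⟨m, rfl⟩ := hdvd
  refine ⟨m, mul_right_cancel₀ hpk ?_⟩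
  rw [hz]
  push_cast
  ring

lemma exists_sub_mem_subring (x : ℚ_[p]) :
    ∃ r ∈ pAdicRat p, x - (r : ℚ_[p]) ∈ PadicInt.subring p := by
  have hp : (p : ℚ_[p]) ≠ 0 := NeZero.ne _
  obtain ⟨k, hk⟩ := pow_unbounded_of_one_lt ‖x‖ (Nat.one_lt_cast.2 (Fact.out : p.Prime).one_lt)
  have hy : ‖(p : ℚ_[p]) ^ k * x‖ ≤ 1 := by
    rw [norm_mul, norm_pow, Padic.norm_p, inv_pow]
    exact inv_mul_le_one_of_le₀ hk.le (by positivity)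
  obtain ⟨m, hm⟩ := PadicInt.denseRange_intCast.exists_dist_lt (⟨_, hy⟩ : ℤ_[p])
    (ε := (p : ℝ)⁻¹ ^ k) (pow_pos (inv_pos.2 (Nat.cast_pos.2 (NeZero.pos p))) k)
  refine ⟨((p : ℚ) ^ k)⁻¹ * m, inv_pow_mul_mem k (intCast_mem p m), ?_⟩
  have : x - (((p : ℚ) ^ k)⁻¹ * m : ℚ) = ((p : ℚ_[p]) ^ k)⁻¹ * ((p : ℚ_[p]) ^ k * x - m) := by
    push_cast
    field_simp
  rw [this, PadicInt.mem_subring_iff, norm_inv_pow_mul_le_one_iff]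
  exact hm.le

lemma fourierChar_eq_of_sub_mem_subring {r s : ℚ} (hr : r ∈ pAdicRat p) (hs : s ∈ pAdicRat p)
    (h : (r : ℚ_[p]) - s ∈ PadicInt.subring p) : 𝐞 (r : ℝ) = 𝐞 (s : ℝ) := by
  obtain ⟨m, hm⟩ := exists_eq_intCast ((pAdicRat p).sub_mem hr hs) (by exact_mod_cast h)
  have hrs : (r : ℝ) = m + s := by exact_mod_cast sub_eq_iff_eq_add.1 hm
  rw [hrs, AddChar.map_add_eq_mul, fourierChar_eq_one_iff.2 ⟨m, rfl⟩, one_mul]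

end pAdicRat

/-- A `p`-adic fractional part of `x`: an element of `ℤ[1/p]` congruent to `x` modulo `ℤ_p`.
It is a choice, unique only up to an integer. -/
noncomputable def padicFract (x : ℚ_[p]) : ℚ := (pAdicRat.exists_sub_mem_subring x).choose

lemma padicFract_mem (x : ℚ_[p]) : padicFract x ∈ pAdicRat p :=
  (pAdicRat.exists_sub_mem_subring x).choose_spec.1

lemma sub_padicFract_mem_subring (x : ℚ_[p]) : x - padicFract x ∈ PadicInt.subring p :=
  (pAdicRat.exists_sub_mem_subring x).choose_spec.2

lemma fourierChar_padicFract {x : ℚ_[p]} {r : ℚ} (hr : r ∈ pAdicRat p)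
    (h : x - r ∈ PadicInt.subring p) : 𝐞 (padicFract x : ℝ) = 𝐞 (r : ℝ) :=
  pAdicRat.fourierChar_eq_of_sub_mem_subring (padicFract_mem x) hr <| by
    simpa using sub_mem h (sub_padicFract_mem_subring x)

/-- The standard additive character `x ↦ exp (2πi {x}_p)` of `ℚ_p`. -/
noncomputable def padicChar (p : ℕ) [Fact p.Prime] : AddChar ℚ_[p] Circle where
  toFun x := 𝐞 (padicFract x : ℝ)
  map_zero_eq_one' := by
    rw [fourierChar_padicFract (pAdicRat p).zero_mem (by simp), Rat.cast_zero,
      AddChar.map_zero_eq_one]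
  map_add_eq_mul' x y := by
    rw [← AddChar.map_add_eq_mul, ← Rat.cast_add]
    refine fourierChar_padicFract
      ((pAdicRat p).add_mem (padicFract_mem x) (padicFract_mem y)) ?_
    rw [Rat.cast_add, add_sub_add_comm]
    exact add_mem (sub_padicFract_mem_subring x) (sub_padicFract_mem_subring y)

lemma padicChar_eq_fourierChar {x : ℚ_[p]} {r : ℚ} (hr : r ∈ pAdicRat p)
    (h : x - r ∈ PadicInt.subring p) : padicChar p x = 𝐞 (r : ℝ) :=
  fourierChar_padicFract hr h

lemma padicChar_eq_one_of_mem_subring {x : ℚ_[p]} (hx : x ∈ PadicInt.subring p) :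
    padicChar p x = 1 := by
  simpa using padicChar_eq_fourierChar (pAdicRat p).zero_mem (x := x) (by simpa using hx)

lemma continuous_padicChar : Continuous (padicChar p) := by
  refine ((IsLocallyConstant.iff_eventually_eq _).2 fun x => ?_).continuous
  filter_upwards [Metric.closedBall_mem_nhds x one_pos] with y hy
  have hyx : y - x ∈ PadicInt.subring p := by
    rwa [PadicInt.mem_subring_iff, ← mem_closedBall_iff_norm]
  rw [← sub_add_cancel y x, AddChar.map_add_eq_mul, padicChar_eq_one_of_mem_subring hyx, one_mul]

/-- The character `(x, t) ↦ χ x * exp (2πit)` of `ℚ_p × ℝ`, with `χ` the standard character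
of `ℚ_p`. -/
noncomputable def padicRealChar (p : ℕ) [Fact p.Prime] : AddChar (ℚ_[p] × ℝ) Circle :=
  (padicChar p).compAddMonoidHom (AddMonoidHom.fst _ _) *
    𝐞.compAddMonoidHom (AddMonoidHom.snd _ _)

lemma padicRealChar_apply (v : ℚ_[p] × ℝ) : padicRealChar p v = padicChar p v.1 * 𝐞 v.2 := rfl

lemma continuous_padicRealChar : Continuous (padicRealChar p) :=
  (continuous_padicChar.comp continuous_fst).mul
    (Real.continuous_fourierChar.comp continuous_snd)

lemma padicRealChar_eq_one_iff {v : ℚ_[p] × ℝ} :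
    padicRealChar p v = 1 ↔
      ∃ r ∈ pAdicRat p, v.1 - (r : ℚ_[p]) ∈ PadicInt.subring p ∧ v.2 = -(r : ℝ) := by
  rw [padicRealChar_apply]
  constructor
  · intro h
    rw [padicChar_eq_fourierChar (padicFract_mem v.1) (sub_padicFract_mem_subring v.1),
      ← AddChar.map_add_eq_mul] at h
    obtain ⟨m, hm⟩ := fourierChar_eq_one_iff.1 h
    refine ⟨padicFract v.1 - m,
      (pAdicRat p).sub_mem (padicFract_mem _) (pAdicRat.intCast_mem p m), ?_, ?_⟩
    · rw [Rat.cast_sub, Rat.cast_intCast, ← sub_add]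
      exact add_mem (sub_padicFract_mem_subring _) (intCast_mem _ m)
    · rw [Rat.cast_sub, Rat.cast_intCast]
      linarith
  · rintro ⟨r, hr, hx, ht⟩
    rw [padicChar_eq_fourierChar hr hx, ht, ← AddChar.map_add_eq_mul, add_neg_cancel,
      AddChar.map_zero_eq_one]

/-- The map `r ↦ (r, -r)` on all of `ℚ`, where it is linear; its restriction to `ℤ[1/p]` is the
lattice embedding `ι`. -/
noncomputable def ratAntidiagonal (p : ℕ) [Fact p.Prime] : ℚ →ₗ[ℚ] ℚ_[p] × ℝ :=
  (Algebra.linearMap ℚ ℚ_[p]).prod (-Algebra.linearMap ℚ ℝ)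

lemma ratAntidiagonal_apply (r : ℚ) : ratAntidiagonal p r = ((r : ℚ_[p]), -(r : ℝ)) := rfl

lemma ratAntidiagonal_injective : Function.Injective (ratAntidiagonal p) := fun _ _ h =>
  Rat.cast_injective (congrArg Prod.fst h)

lemma padicRealChar_inv_pow_smul_eq_one_iff {n : ℕ} {v : ℚ_[p] × ℝ} :
    padicRealChar p ((p ^ n : ℚ)⁻¹ • v) = 1 ↔
      ∃ r ∈ pAdicRat p, ‖v.1 - (r : ℚ_[p])‖ ≤ (p : ℝ)⁻¹ ^ n ∧ v.2 = -(r : ℝ) := by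
  have hpn : (p ^ n : ℚ) ≠ 0 := pow_ne_zero _ (NeZero.ne _)
  rw [padicRealChar_eq_one_iff]
  refine (Equiv.mulLeft₀ _ hpn).exists_congr fun s =>
    and_congr (pAdicRat.pow_mul_mem_iff n).symm (and_congr ?_ ?_)
  · have hp : (p : ℚ_[p]) ≠ 0 := NeZero.ne _
    rw [PadicInt.mem_subring_iff, ← norm_inv_pow_mul_le_one_iff]
    simp [Rat.smul_def, mul_sub, hp]
  · rw [Prod.smul_snd, inv_smul_eq_iff₀ hpn]
    simp [Rat.smul_def]

lemma padicRealChar_inv_pow_smul_ratAntidiagonal (n : ℕ) {r : ℚ} (hr : r ∈ pAdicRat p) :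
    padicRealChar p ((p ^ n : ℚ)⁻¹ • ratAntidiagonal p r) = 1 :=
  padicRealChar_inv_pow_smul_eq_one_iff.2 ⟨r, hr, by simp [ratAntidiagonal_apply], rfl⟩

lemma ker_ofAddChar_padicRealChar :
    (solenoid.ofAddChar p (padicRealChar p)).ker =
      (pAdicRat p).map (ratAntidiagonal p).toAddMonoidHom := by
  ext v
  rw [solenoid.mem_ker_ofAddChar]
  constructor
  · intro hv
    simp only [padicRealChar_inv_pow_smul_eq_one_iff] at hv
    obtain ⟨r, hr, -, hvr⟩ := hv 0
    have hnorm (n : ℕ) : ‖v.1 - (r : ℚ_[p])‖ ≤ (p : ℝ)⁻¹ ^ n := by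
      obtain ⟨s, -, hvs, hs⟩ := hv n
      have hsr : s = r := by exact_mod_cast neg_injective (hs.symm.trans hvr)
      exact hsr ▸ hvs
    have hlim : Filter.Tendsto (fun n : ℕ => (p : ℝ)⁻¹ ^ n) Filter.atTop (nhds 0) :=
      tendsto_pow_atTop_nhds_zero_of_lt_one (by positivity)
        (inv_lt_one_of_one_lt₀ (Nat.one_lt_cast.2 (Fact.out : p.Prime).one_lt))
    have hv1 : v.1 = r := sub_eq_zero.1 (norm_le_zero_iff.1 (ge_of_tendsto' hlim hnorm))
    exact ⟨r, hr, Prod.ext hv1.symm hvr.symm⟩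
  · rintro ⟨r, hr, rfl⟩ n
    exact padicRealChar_inv_pow_smul_ratAntidiagonal n hr

lemma surjOn_padicRealChar_inv_pow_smul (n : ℕ) :
    Set.SurjOn (fun v => padicRealChar p ((p ^ n : ℚ)⁻¹ • v))
      (Metric.closedBall (0 : ℚ_[p]) 1 ×ˢ Set.Icc (0 : ℝ) 1) Set.univ := by
  intro z _
  obtain ⟨s, rfl⟩ := fourierChar_surjective z
  -- Translating `p ^ n • (0, s)` by the lattice point of the integer `m` brings it into the box.
  let m : ℤ := ⌊(p : ℝ) ^ n * s⌋
  have hbox : (p ^ n : ℚ) • ((0 : ℚ_[p]), s) + ratAntidiagonal p m =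
      ((m : ℚ_[p]), Int.fract ((p : ℝ) ^ n * s)) := by
    simp [ratAntidiagonal_apply, Rat.smul_def, Int.fract, m, sub_eq_add_neg]
  refine ⟨((m : ℚ_[p]), Int.fract ((p : ℝ) ^ n * s)), ⟨?_, ?_⟩, ?_⟩
  · simpa using Padic.norm_int_le_one (p := p) m
  · exact ⟨Int.fract_nonneg _, (Int.fract_lt_one _).le⟩
  · have hpn : (p ^ n : ℚ) ≠ 0 := pow_ne_zero _ (NeZero.ne _)
    beta_reduce
    rw [← hbox, smul_add, inv_smul_smul₀ hpn, AddChar.map_add_eq_mul,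
      padicRealChar_inv_pow_smul_ratAntidiagonal n (pAdicRat.intCast_mem p m), mul_one,
      padicRealChar_apply, AddChar.map_zero_eq_one, one_mul]

lemma one_le_norm_ratAntidiagonal {r : ℚ} (hr : r ∈ pAdicRat p) (hr0 : r ≠ 0) :
    1 ≤ ‖ratAntidiagonal p r‖ := by
  by_contra! hlt
  obtain ⟨hpadic, hreal⟩ := max_lt_iff.1 (Prod.norm_def (ratAntidiagonal p r) ▸ hlt)
  obtain ⟨m, rfl⟩ := pAdicRat.exists_eq_intCast hr hpadic.le
  refine hr0 ?_
  rw [ratAntidiagonal_apply, norm_neg, Rat.cast_intCast, Real.norm_eq_abs] at hreal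
  exact_mod_cast Int.abs_lt_one_iff.1 (by exact_mod_cast hreal)

lemma discreteTopology_map_ratAntidiagonal :
    DiscreteTopology ((pAdicRat p).map (ratAntidiagonal p).toAddMonoidHom) := by
  refine .of_forall_le_norm one_pos ?_
  rintro ⟨_, r, hr, rfl⟩ hne
  exact one_le_norm_ratAntidiagonal hr fun h => hne (Subtype.ext (by simp [h]))

end Lattice

/-- For `p` prime, the map `ι : ℤ[1/p] → ℚ_p × ℝ`, `r ↦ (r, -r)`, is an
injective group homomorphism, its image is a discrete subgroup of `ℚ_p × ℝ`, and the
quotient topological group `(ℚ_p × ℝ)/ι(ℤ[1/p])` is isomorphic as a topological group to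
the `p`-solenoid `𝕊_p`; in particular the image of `ι` is cocompact. -/
theorem pAdicRat_lattice_quotient_solenoid (p : ℕ) [Fact p.Prime] :
    ∃ ι : pAdicRat p →+ ℚ_[p] × ℝ,
      (∀ r : pAdicRat p, ι r = (((r : ℚ) : ℚ_[p]), -((r : ℚ) : ℝ))) ∧
      Function.Injective ι ∧
      DiscreteTopology ι.range ∧
      (∃ e : ((ℚ_[p] × ℝ) ⧸ ι.range) ≃ solenoid p,
        (∀ a b : (ℚ_[p] × ℝ) ⧸ ι.range, e (a + b) = e a * e b) ∧
        Continuous e ∧ Continuous e.symm) ∧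
      CompactSpace ((ℚ_[p] × ℝ) ⧸ ι.range) := by
  let φ := solenoid.ofAddChar p (padicRealChar p)
  let ι := (ratAntidiagonal p).toAddMonoidHom.comp (pAdicRat p).subtype
  have hrange : ι.range = φ.ker := by
    rw [AddMonoidHom.range_comp, AddSubgroup.range_subtype, ker_ofAddChar_padicRealChar]
  have hdiscrete : DiscreteTopology φ.ker :=
    ker_ofAddChar_padicRealChar (p := p) ▸ discreteTopology_map_ratAntidiagonal
  have hbox : IsCompact (Metric.closedBall (0 : ℚ_[p]) 1 ×ˢ Set.Icc (0 : ℝ) 1) :=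
    (isCompact_closedBall _ _).prod isCompact_Icc
  have hsurj := solenoid.surjOn_ofAddChar continuous_padicRealChar hbox
    surjOn_padicRealChar_inv_pow_smul
  have hcompact : CompactSpace ((ℚ_[p] × ℝ) ⧸ φ.ker) :=
    compactSpace_quotient_ker_of_surjOn hbox hsurj
  have : T2Space (Additive (solenoid p)) := inferInstanceAs (T2Space (solenoid p))
  let e := quotientKerContinuousAddEquiv φ
    (solenoid.continuous_ofAddChar continuous_padicRealChar)
    fun z => (hsurj (Set.mem_univ z)).imp fun _ => And.right
  refine ⟨ι, fun _ => rfl, ratAntidiagonal_injective.comp Subtype.val_injective, ?_⟩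
  rw [hrange]
  exact ⟨hdiscrete, ⟨e.toEquiv.trans Additive.toMul, map_add e, e.continuous,
    e.symm.continuous⟩, hcompact⟩
end
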